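/- arXiv:2506.18473 — 9 statements merged into one kernel-verified Lean document; each statement's English description precedes it below -/
import Mathlib

section
/- Let ABCDE be a strictly convex equilateral pentagon in the Euclidean plane with interior angles α, β, γ, δ, ε at A, B, C, D, E respectively. If 2α + β = 2π and 2δ + γ = 2π (pentagon type 8 conditions), then β + ε = π. -/
/-!
For a counterclockwise pentagon, turning by the interior angles expresses every edge vector as a
unit complex number times `C - B`. With `x = β/2`, `y = γ/2`, the two angle conditions give
`α = π - x`, `δ = π - y`, and closing up the pentagon reads
`e^{2ix} + e^{ix} + e^{-2iy} + e^{-iy} = 1` (`closing_relation`), where `x, y ∈ (0, π/2)`.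

In terms of `p = cos ((x+y)/2)` and `q = cos ((x-y)/2)` the imaginary part says that either `x = y`
or `2(2p²-1)q + p = 0`. In the second case the real part `2(2p²-1)(2q²-1) + 2pq = 1` forces
`p = q = 1/2`, but `|x-y|/2 < π/4` makes `q > 1/2`. Hence `x = y` (`half_angles_eq`), i.e. `β = γ`.
Comparing the two edges at `E` then gives `e^{i(β+ε)} = -1`, so `β + ε = π`.

The clockwise case follows from the symmetry `A ↔ D`, `B ↔ C`.
-/

open EuclideanGeometry

/-- Signed area determinant of two plane vectors. -/
noncomputable def det2 (u v : EuclideanSpace ℝ (Fin 2)) : ℝ :=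
  u 0 * v 1 - u 1 * v 0

/-- `R` lies strictly to the left of the directed line from `P` to `Q`. -/
def SLeft (P Q R : EuclideanSpace ℝ (Fin 2)) : Prop :=
  0 < det2 (Q - P) (R - P)

/-- The five points are in strictly convex position, listed in counterclockwise
cyclic order along their convex hull (in particular no three are collinear):
for every directed edge of the pentagon, all remaining vertices lie strictly to its left. -/
def CcwConvex5 (A B C D E : EuclideanSpace ℝ (Fin 2)) : Prop :=
  SLeft A B C ∧ SLeft A B D ∧ SLeft A B E ∧
  SLeft B C D ∧ SLeft B C E ∧ SLeft B C A ∧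
  SLeft C D E ∧ SLeft C D A ∧ SLeft C D B ∧
  SLeft D E A ∧ SLeft D E B ∧ SLeft D E C ∧
  SLeft E A B ∧ SLeft E A C ∧ SLeft E A D

/-- The five points are in strictly convex position, listed in cyclic order
(either orientation) along their convex hull, with no three collinear. -/
def ConvexPos5 (A B C D E : EuclideanSpace ℝ (Fin 2)) : Prop :=
  CcwConvex5 A B C D E ∨ CcwConvex5 E D C B A

/-- The pentagon `ABCDE` is equilateral. -/
def Equilateral5 (A B C D E : EuclideanSpace ℝ (Fin 2)) : Prop :=
  dist A B = dist B C ∧ dist B C = dist C D ∧ dist C D = dist D E ∧ dist D E = dist E A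

/-- The plane vector `u` as a complex number. -/
noncomputable def toC (u : EuclideanSpace ℝ (Fin 2)) : ℂ := ⟨u 0, u 1⟩

lemma toC_sub (u v : EuclideanSpace ℝ (Fin 2)) : toC (u - v) = toC u - toC v := by
  apply Complex.ext <;> simp [toC]

/-- If `v` has the length of `u` and lies to its left, it is `u` rotated by the unoriented angle
between the two. -/
lemma toC_eq_exp_mul (u v : EuclideanSpace ℝ (Fin 2)) (hn : ‖u‖ = ‖v‖) (hd : 0 < det2 u v) :
    toC v = Complex.exp ((InnerProductGeometry.angle u v : ℝ) * Complex.I) * toC u := by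
  set θ := InnerProductGeometry.angle u v with hθ
  have hc : Real.cos θ * (‖u‖ * ‖v‖) = inner ℝ u v :=
    InnerProductGeometry.cos_angle_mul_norm_mul_norm u v
  have hs : 0 ≤ Real.sin θ := InnerProductGeometry.sin_angle_nonneg u v
  have hu : ‖u‖ ^ 2 = u 0 ^ 2 + u 1 ^ 2 := by
    rw [EuclideanSpace.real_norm_sq_eq]; simp
  have hv : ‖v‖ ^ 2 = v 0 ^ 2 + v 1 ^ 2 := by
    rw [EuclideanSpace.real_norm_sq_eq]; simp
  have hi : inner ℝ u v = u 0 * v 0 + u 1 * v 1 := by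
    simp [PiLp.inner_apply, mul_comm]
  rw [hi, ← hn] at hc
  rw [← hn] at hv
  have hsc := Real.sin_sq_add_cos_sq θ
  unfold det2 at hd
  generalize ‖u‖ = l at *
  have hl : 0 < l ^ 2 := by
    rcases (sq_nonneg l).lt_or_eq with h | h
    · exact h
    · rw [← h] at hu
      have h0 : u 0 = 0 := by nlinarith [sq_nonneg (u 0), sq_nonneg (u 1)]
      have h1 : u 1 = 0 := by nlinarith [sq_nonneg (u 0), sq_nonneg (u 1)]
      simp [h0, h1] at hd
  -- Lagrange's identity `det² + inner² = l⁴`, with both sides of the claim nonnegative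
  have hdet : Real.sin θ * l ^ 2 = u 0 * v 1 - u 1 * v 0 := by
    have hsq : (Real.sin θ * l ^ 2) ^ 2 = (u 0 * v 1 - u 1 * v 0) ^ 2 := by
      have e1 : (Real.cos θ * (l * l)) ^ 2 = (u 0 * v 0 + u 1 * v 1) ^ 2 := by rw [hc]
      have e2 : l ^ 2 * l ^ 2 = (u 0 ^ 2 + u 1 ^ 2) * (v 0 ^ 2 + v 1 ^ 2) := by rw [← hu, ← hv]
      linear_combination l ^ 4 * hsc - e1 + e2
    exact (pow_left_inj₀ (by positivity) hd.le two_ne_zero).1 hsq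
  have hcθ : Real.cos θ * l ^ 2 = u 0 * v 0 + u 1 * v 1 := by
    rw [sq, hc]
  apply Complex.ext
  · simp only [toC, Complex.mul_re, Complex.exp_ofReal_mul_I_re, Complex.exp_ofReal_mul_I_im]
    apply mul_left_cancel₀ hl.ne'
    linear_combination v 0 * hu - u 0 * hcθ + u 1 * hdet
  · simp only [toC, Complex.mul_im, Complex.exp_ofReal_mul_I_re, Complex.exp_ofReal_mul_I_im]
    apply mul_left_cancel₀ hl.ne'
    linear_combination v 1 * hu - u 1 * hcθ - u 0 * hdet

/-- `toC_eq_exp_mul` at the vertex `Q` of an angle `∠ P Q R` with `P` to the left of `QR`. -/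
lemma vertex_rotation {P Q R : EuclideanSpace ℝ (Fin 2)} (hn : dist Q R = dist P Q)
    (h : SLeft Q R P) :
    toC P - toC Q = Complex.exp ((∠ P Q R : ℝ) * Complex.I) * (toC R - toC Q) := by
  rw [← toC_sub, ← toC_sub, EuclideanGeometry.angle_comm]
  refine toC_eq_exp_mul _ _ ?_ h
  rw [← dist_eq_norm_vsub, ← dist_eq_norm, dist_comm R Q, hn]

lemma vertex_angle_mem {P Q R : EuclideanSpace ℝ (Fin 2)} (hn : dist Q R = dist P Q)
    (h : SLeft Q R P) : 0 < ∠ P Q R ∧ ∠ P Q R < Real.pi := by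
  have hr := vertex_rotation hn h
  have hsin : Real.sin (∠ P Q R) ≠ 0 := by
    intro h0
    have hre := congrArg Complex.re hr
    have him := congrArg Complex.im hr
    simp only [toC, Complex.mul_re, Complex.mul_im, Complex.sub_re, Complex.sub_im,
      Complex.exp_ofReal_mul_I_re, Complex.exp_ofReal_mul_I_im, h0] at hre him
    simp only [SLeft, det2, PiLp.sub_apply] at h
    rw [hre, him] at h
    linarith
  constructor
  · refine (EuclideanGeometry.angle_nonneg P Q R).lt_of_ne fun h0 => hsin ?_
    rw [← h0, Real.sin_zero]
  · refine (EuclideanGeometry.angle_le_pi P Q R).lt_of_ne fun h0 => hsin ?_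
    rw [h0, Real.sin_pi]

/-- The closing relation, split into real and imaginary parts, forces equal half-angles. -/
lemma half_angles_eq {x y : ℝ} (hx : 0 < x) (hx' : x < Real.pi / 2) (hy : 0 < y)
    (hy' : y < Real.pi / 2)
    (hre : Real.cos (2 * x) + Real.cos x + Real.cos (2 * y) + Real.cos y = 1)
    (him : Real.sin (2 * x) + Real.sin x = Real.sin (2 * y) + Real.sin y) : x = y := by
  obtain ⟨s, d, rfl, rfl⟩ : ∃ s d : ℝ, x = s + d ∧ y = s - d :=
    ⟨(x + y) / 2, (x - y) / 2, by ring, by ring⟩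
  have hq : 1 / 2 < Real.cos d := by
    rw [← Real.cos_pi_div_three, ← Real.cos_abs d]
    have hd : |d| < Real.pi / 4 := abs_lt.2 ⟨by linarith, by linarith⟩
    exact Real.cos_lt_cos_of_nonneg_of_le_pi (abs_nonneg _) (by linarith [Real.pi_pos])
      (by linarith [Real.pi_pos])
  have hs2 := Real.sin_sq_add_cos_sq s
  have hd2 := Real.sin_sq_add_cos_sq d
  simp only [Real.cos_two_mul, Real.sin_two_mul, Real.cos_add, Real.cos_sub, Real.sin_add,
    Real.sin_sub] at hre him
  have hfac : Real.sin d * (2 * (2 * Real.cos s ^ 2 - 1) * Real.cos d + Real.cos s) = 0 := by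
    linear_combination him / 2 + 2 * Real.sin d * Real.cos d * hs2
  rcases mul_eq_zero.1 hfac with h | h
  · have : d = 0 := (Real.sin_eq_zero_iff_of_lt_of_lt (by linarith) (by linarith)).1 h
    linarith
  · exfalso
    have hre' : 2 * (2 * Real.cos s ^ 2 - 1) * (2 * Real.cos d ^ 2 - 1)
        + 2 * Real.cos s * Real.cos d = 1 := by
      have e : Real.sin s ^ 2 * Real.sin d ^ 2
          = (1 - Real.cos s ^ 2) * (1 - Real.cos d ^ 2) := by
        rw [Real.sin_sq, Real.sin_sq]
      linear_combination hre - 4 * e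
    have hp2 : Real.cos s ^ 2 = 1 / 4 := by
      linear_combination Real.cos d * h / 2 - hre' / 4
    have hp : 0 < Real.cos s :=
      Real.cos_pos_of_mem_Ioo ⟨by linarith [Real.pi_pos], by linarith⟩
    rw [hp2] at h
    nlinarith

/-- The two angle conditions turn the closing-up of the pentagon into a relation between `β/2`
and `γ/2`. -/
lemma closing_relation {α β γ δ : ℝ} {a b c d e : ℂ} (hbc : c - b ≠ 0)
    (hB : a - b = Complex.exp (β * Complex.I) * (c - b))
    (hA : e - a = Complex.exp (α * Complex.I) * (b - a))
    (hC : b - c = Complex.exp (γ * Complex.I) * (d - c))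
    (hD : c - d = Complex.exp (δ * Complex.I) * (e - d))
    (h1 : 2 * α + β = 2 * Real.pi) (h2 : 2 * δ + γ = 2 * Real.pi) :
    Complex.exp ((2 * (β / 2) : ℝ) * Complex.I) + Complex.exp ((β / 2 : ℝ) * Complex.I)
      + Complex.exp ((-(2 * (γ / 2)) : ℝ) * Complex.I)
      + Complex.exp ((-(γ / 2) : ℝ) * Complex.I) = 1 := by
  obtain ⟨x, rfl⟩ : ∃ x : ℝ, β = 2 * x := ⟨β / 2, by ring⟩
  obtain ⟨y, rfl⟩ : ∃ y : ℝ, γ = 2 * y := ⟨γ / 2, by ring⟩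
  obtain rfl : α = Real.pi - x := by linarith
  obtain rfl : δ = Real.pi - y := by linarith
  have hsup : ∀ t : ℝ, Complex.exp ((Real.pi - t : ℝ) * Complex.I)
      = -Complex.exp ((-t : ℝ) * Complex.I) := by
    intro t
    rw [show ((Real.pi - t : ℝ) : ℂ) * Complex.I
      = (-t : ℝ) * Complex.I + Real.pi * Complex.I by push_cast; ring, Complex.exp_add,
      Complex.exp_pi_mul_I]
    ring
  have hdbl : ∀ t : ℝ, Complex.exp ((2 * t : ℝ) * Complex.I)
      = Complex.exp ((t : ℝ) * Complex.I) ^ 2 := by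
    intro t
    rw [← Complex.exp_nat_mul]
    congr 1
    push_cast
    ring
  have hneg : ∀ t : ℝ, Complex.exp ((-t : ℝ) * Complex.I)
      = (Complex.exp ((t : ℝ) * Complex.I))⁻¹ := by
    intro t
    rw [← Complex.exp_neg]
    congr 1
    push_cast
    ring
  rw [hsup, hneg] at hA hD
  rw [hdbl] at hB hC
  rw [show 2 * x / 2 = x by ring, show 2 * y / 2 = y by ring, hneg, hneg, hdbl, hdbl]
  have hX := Complex.exp_ne_zero ((x : ℝ) * Complex.I)
  have hY := Complex.exp_ne_zero ((y : ℝ) * Complex.I)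
  generalize Complex.exp ((x : ℝ) * Complex.I) = X at *
  generalize Complex.exp ((y : ℝ) * Complex.I) = Y at *
  have hA' : e - a = X * (c - b) := by
    rw [hA, ← neg_sub a b, hB]; field_simp
  have hC' : d - c = -(Y ^ 2)⁻¹ * (c - b) := by
    rw [← neg_sub b c, hC]; field_simp
  have hD' : e - d = -Y⁻¹ * (c - b) := by
    have : e - d = -Y * (c - d) := by rw [hD]; field_simp
    rw [this, ← neg_sub d c, hC']; field_simp
  apply mul_right_cancel₀ hbc
  linear_combination hC' + hD' - hA' - hB

/-- The counterclockwise case; both conclusions are needed because the reflection reducing the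
clockwise case to this one exchanges `β` and `γ`. -/
lemma ccw_case {A B C D E : EuclideanSpace ℝ (Fin 2)}
    (hconv : CcwConvex5 A B C D E) (hequi : Equilateral5 A B C D E)
    (h1 : 2 * ∠ E A B + ∠ A B C = 2 * Real.pi) (h2 : 2 * ∠ C D E + ∠ B C D = 2 * Real.pi) :
    ∠ A B C = ∠ B C D ∧ ∠ A B C + ∠ D E A = Real.pi := by
  obtain ⟨-, -, hABE, -, -, hBCA, -, -, hCDB, -, -, hDEC, -, -, hEAD⟩ := hconv
  obtain ⟨e1, e2, e3, e4⟩ := hequi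
  have hB := vertex_rotation e1.symm hBCA
  have hA := vertex_rotation (by rw [e1, e2, e3, e4]) hABE
  have hC := vertex_rotation e2.symm hCDB
  have hD := vertex_rotation e3.symm hDEC
  have hE := vertex_rotation e4.symm hEAD
  have hbc : toC C - toC B ≠ 0 := by
    intro h
    rw [← toC_sub] at h
    have h0 := congrArg Complex.re h
    have h1 := congrArg Complex.im h
    simp only [toC, Complex.zero_re, Complex.zero_im] at h0 h1
    simp [SLeft, det2] at hBCA h0 h1
    simp [h0, h1] at hBCA
  have hcl := closing_relation hbc hB hA hC hD h1 h2
  obtain ⟨hβ0, hβ1⟩ := vertex_angle_mem e1.symm hBCA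
  obtain ⟨hγ0, hγ1⟩ := vertex_angle_mem e2.symm hCDB
  obtain ⟨hε0, hε1⟩ := vertex_angle_mem e4.symm hEAD
  have hre := congrArg Complex.re hcl
  have him := congrArg Complex.im hcl
  simp only [Complex.add_re, Complex.add_im, Complex.exp_ofReal_mul_I_re,
    Complex.exp_ofReal_mul_I_im, Real.cos_neg, Real.sin_neg, Complex.one_re,
    Complex.one_im] at hre him
  have hxy := half_angles_eq (by linarith) (by linarith) (by linarith) (by linarith) hre
    (by linarith)
  have hβγ : ∠ A B C = ∠ B C D := by linarith
  refine ⟨hβγ, ?_⟩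
  have hαδ : ∠ C D E = ∠ E A B := by linarith
  rw [hαδ] at hD
  rw [← hβγ] at hC
  -- Going around the pentagon, the five rotations compose to a half-turn.
  have hprod : Complex.exp ((∠ D E A : ℝ) * Complex.I) *
      (Complex.exp ((∠ E A B : ℝ) * Complex.I) ^ 2 *
        Complex.exp ((∠ A B C : ℝ) * Complex.I)) *
        Complex.exp ((∠ A B C : ℝ) * Complex.I) = -1 := by
    apply mul_right_cancel₀ hbc
    linear_combination (-Complex.exp ((∠ E A B : ℝ) * Complex.I) ^ 2 *
        Complex.exp ((∠ A B C : ℝ) * Complex.I) * Complex.exp ((∠ D E A : ℝ) * Complex.I)) * hB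
      + Complex.exp ((∠ E A B : ℝ) * Complex.I) * Complex.exp ((∠ A B C : ℝ) * Complex.I) *
        Complex.exp ((∠ D E A : ℝ) * Complex.I) * hA
      - hC
      + Complex.exp ((∠ A B C : ℝ) * Complex.I) * hD
      - Complex.exp ((∠ E A B : ℝ) * Complex.I) * Complex.exp ((∠ A B C : ℝ) * Complex.I) * hE
  have hfull : Complex.exp ((∠ E A B : ℝ) * Complex.I) ^ 2 *
      Complex.exp ((∠ A B C : ℝ) * Complex.I) = 1 := by
    rw [← Complex.exp_nat_mul, ← Complex.exp_add, ← Complex.exp_two_pi_mul_I]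
    congr 1
    have h1' : (2 * (∠ E A B : ℝ) + (∠ A B C : ℝ) : ℂ) = 2 * Real.pi := by exact_mod_cast h1
    push_cast
    linear_combination Complex.I * h1'
  rw [hfull, mul_one, ← Complex.exp_add, ← add_mul, ← Complex.ofReal_add] at hprod
  have hcos := congrArg Complex.re hprod
  rw [Complex.exp_ofReal_mul_I_re] at hcos
  -- `cos (ε + β - π) = 1` with `|ε + β - π| < 2π`
  have h := (Real.cos_eq_one_iff_of_lt_of_lt (x := ∠ D E A + ∠ A B C - Real.pi)
    (by linarith) (by linarith)).1 (by rw [Real.cos_sub_pi, hcos]; simp)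
  linarith

theorem type8_two_angles_sum_pi
    (A B C D E : EuclideanSpace ℝ (Fin 2)) (α β γ δ ε : ℝ)
    (hconv : ConvexPos5 A B C D E) (hequi : Equilateral5 A B C D E)
    (hα : α = ∠ E A B) (hβ : β = ∠ A B C) (hγ : γ = ∠ B C D)
    (hδ : δ = ∠ C D E) (hε : ε = ∠ D E A)
    (h1 : 2 * α + β = 2 * Real.pi) (h2 : 2 * δ + γ = 2 * Real.pi) :
    β + ε = Real.pi := by
  subst hα hβ hγ hδ hε
  rcases hconv with h | h
  · exact (ccw_case h hequi h1 h2).2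
  · obtain ⟨e1, e2, e3, e4⟩ := hequi
    have hc : CcwConvex5 D C B A E := by
      unfold CcwConvex5 at h ⊢
      tauto
    have he : Equilateral5 D C B A E := by
      refine ⟨?_, ?_, ?_, ?_⟩
      · rw [dist_comm D C, dist_comm C B, e2]
      · rw [dist_comm C B, dist_comm B A, e1]
      · rw [dist_comm B A, dist_comm A E, e1, e2, e3, e4]
      · rw [dist_comm A E, dist_comm E D, e4]
    obtain ⟨k1, k2⟩ := ccw_case hc he
      (by rw [EuclideanGeometry.angle_comm E D C, EuclideanGeometry.angle_comm D C B]; exact h2)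
      (by rw [EuclideanGeometry.angle_comm B A E, EuclideanGeometry.angle_comm C B A]; exact h1)
    rw [k1, EuclideanGeometry.angle_comm C B A, EuclideanGeometry.angle_comm A E D] at k2
    exact k2
end

section
/- The strictly convex equilateral pentagon of type 8 is unique up to similarity: if ABCDE and A'B'C'D'E' are strictly convex equilateral pentagons whose interior angles satisfy 2α + β = 2π, 2δ + γ = 2π and 2α' + β' = 2π, 2δ' + γ' = 2π respectively, then the corresponding interior angles agree: α = α', β = β', γ = γ', δ = δ', ε = ε'. -/
/-!
Rotate the pentagon's edge vectors into one another. If two consecutive edges `u`, `v` of equal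
length enclose the interior angle `θ`, then `v = -u · exp (-σ i θ)` in `ℂ`, where `σ = ±1` is the
orientation of the pentagon (`edge_rotation`). Substituting `β = 2π - 2α`, `γ = 2π - 2δ`, the fact
that the edges sum to zero becomes
`cos 2α - cos α + cos 2δ - cos δ = 1` and `sin 2α - sin α = sin 2δ - sin δ`,
and comparing the two edges at the vertex `E` gives `cos ε = -cos (α + δ)` (`pentagon_relations`).

Since `β, γ ∈ (0, π)`, the cosines `p = cos α`, `q = cos δ` are negative. Eliminating the sines shows
that either `p = q`, or `p + q = -1/2` and `p q = -1/2`; the latter contradicts `p, q < 0`.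
Hence `p = q` is the negative root of `4 x² - 2 x - 3` (`cos_eq_and_root`). So `α = δ` has only one
possible value, and it determines the other three angles.
-/


open EuclideanGeometry

/-- Consecutive edges `PQ`, `QR` of equal length, turning in the direction given by the sign `σ`,
differ by the rotation `-exp (-σ i ∠PQR)`; the second equation is the inverse rotation. -/
lemma edge_rotation (P Q R : EuclideanSpace ℝ (Fin 2)) (r σ : ℝ) (hr : 0 < r) (hσ : σ ^ 2 = 1)
    (h1 : dist P Q = r) (h2 : dist Q R = r) (hd : 0 < σ * det2 (Q - P) (R - P)) :
    toC (R - Q) = -toC (Q - P) * ⟨Real.cos (∠ P Q R), -(σ * Real.sin (∠ P Q R))⟩ ∧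
    toC (Q - P) = -toC (R - Q) * ⟨Real.cos (∠ P Q R), σ * Real.sin (∠ P Q R)⟩ ∧
    0 < Real.sin (∠ P Q R) := by
  have hc : Real.cos (∠ P Q R) * (‖P - Q‖ * ‖R - Q‖) = inner ℝ (P - Q) (R - Q) := by
    simpa [EuclideanGeometry.angle] using
      InnerProductGeometry.cos_angle_mul_norm_mul_norm (P - Q) (R - Q)
  have n1 : ‖P - Q‖ = r := by rw [← dist_eq_norm]; exact h1
  have n2 : ‖R - Q‖ = r := by rw [← dist_eq_norm, dist_comm]; exact h2
  have hs0 : 0 ≤ Real.sin (∠ P Q R) :=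
    Real.sin_nonneg_of_nonneg_of_le_pi (EuclideanGeometry.angle_nonneg _ _ _)
      (EuclideanGeometry.angle_le_pi _ _ _)
  have hsc := Real.sin_sq_add_cos_sq (∠ P Q R)
  rw [n1, n2] at hc
  have m1 : ‖P - Q‖ ^ 2 = r ^ 2 := by rw [n1]
  have m2 : ‖R - Q‖ ^ 2 = r ^ 2 := by rw [n2]
  rw [EuclideanSpace.norm_sq_eq] at m1 m2
  simp only [Fin.sum_univ_two, Real.norm_eq_abs, sq_abs, PiLp.sub_apply] at m1 m2
  simp only [PiLp.inner_apply, Fin.sum_univ_two, PiLp.sub_apply, RCLike.inner_apply,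
    conj_trivial] at hc
  simp only [det2, PiLp.sub_apply] at hd
  generalize Real.cos (∠ P Q R) = c at *
  generalize Real.sin (∠ P Q R) = s at *
  obtain ⟨x, hx⟩ : ∃ x, x = Q 0 - P 0 := ⟨_, rfl⟩
  obtain ⟨y, hy⟩ : ∃ y, y = Q 1 - P 1 := ⟨_, rfl⟩
  obtain ⟨X, hX⟩ : ∃ X, X = R 0 - Q 0 := ⟨_, rfl⟩
  obtain ⟨Y, hY⟩ : ∃ Y, Y = R 1 - Q 1 := ⟨_, rfl⟩
  have e1 : x ^ 2 + y ^ 2 = r ^ 2 := by rw [← m1, hx, hy]; ring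
  have e2 : X ^ 2 + Y ^ 2 = r ^ 2 := by rw [← m2, hX, hY]
  have e3 : c * r ^ 2 = -(x * X + y * Y) := by rw [hx, hy, hX, hY]; linear_combination hc
  have e4 : 0 < σ * (x * Y - y * X) := by
    convert hd using 2
    rw [hx, hy, hX, hY]; ring
  have e5 : s * r ^ 2 = σ * (x * Y - y * X) := by
    rw [← sq_eq_sq₀ (by positivity) e4.le]
    linear_combination r ^ 4 * hsc - (x * Y - y * X) ^ 2 * hσ
      - (c * r ^ 2 - (x * X + y * Y)) * e3 - (X ^ 2 + Y ^ 2) * e1 - r ^ 2 * e2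
  have hr2 : r ^ 2 ≠ 0 := by positivity
  have tU : toC (Q - P) = ⟨x, y⟩ := by simp [toC, hx, hy]
  have tV : toC (R - Q) = ⟨X, Y⟩ := by simp [toC, hX, hY]
  have e6 : σ * s * r ^ 2 = x * Y - y * X := by
    linear_combination σ * e5 + (x * Y - y * X) * hσ
  refine ⟨?_, ?_, ?_⟩
  · rw [tU, tV]
    apply Complex.ext <;> simp <;> apply mul_right_cancel₀ hr2
    · linear_combination -X * e1 + x * e3 + y * e6
    · linear_combination -Y * e1 + y * e3 - x * e6
  · rw [tU, tV]
    apply Complex.ext <;> simp <;> apply mul_right_cancel₀ hr2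
    · linear_combination -x * e2 + X * e3 - Y * e6
    · linear_combination -y * e2 + Y * e3 + X * e6
  · by_contra h
    have : s = 0 := le_antisymm (not_lt.mp h) hs0
    rw [this] at e5
    linarith

lemma exists_orientation {A B C D E : EuclideanSpace ℝ (Fin 2)} (h : ConvexPos5 A B C D E) :
    ∃ σ : ℝ, σ ^ 2 = 1 ∧ 0 < σ * det2 (B - A) (C - A) ∧ 0 < σ * det2 (C - B) (D - B) ∧
      0 < σ * det2 (D - C) (E - C) ∧ 0 < σ * det2 (E - D) (A - D) ∧
      0 < σ * det2 (A - E) (B - E) := by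
  rcases h with h | h
  · refine ⟨1, by norm_num, ?_⟩
    unfold CcwConvex5 SLeft at h
    simp only [one_mul]
    tauto
  · refine ⟨-1, by norm_num, ?_⟩
    unfold CcwConvex5 SLeft at h
    simp only [det2, PiLp.sub_apply] at h ⊢
    obtain ⟨g1, -, -, g2, -, -, g3, -, -, g4, -, -, g5, -, -⟩ := h
    refine ⟨?_, ?_, ?_, ?_, ?_⟩ <;> linarith

/-- The type 8 relations, in terms of the sines and cosines of `α` and `δ`. -/
lemma pentagon_relations (A B C D E : EuclideanSpace ℝ (Fin 2)) (hconv : ConvexPos5 A B C D E)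
    (hequi : Equilateral5 A B C D E)
    (h1 : 2 * ∠ E A B + ∠ A B C = 2 * Real.pi) (h2 : 2 * ∠ C D E + ∠ B C D = 2 * Real.pi) :
    (2 * Real.cos (∠ E A B) ^ 2 - 1 - Real.cos (∠ E A B)
      + (2 * Real.cos (∠ C D E) ^ 2 - 1 - Real.cos (∠ C D E)) = 1) ∧
    (Real.sin (∠ E A B) * (2 * Real.cos (∠ E A B) - 1)
      = Real.sin (∠ C D E) * (2 * Real.cos (∠ C D E) - 1)) ∧
    Real.cos (∠ E A B) < 0 ∧ Real.cos (∠ C D E) < 0 ∧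
    Real.cos (∠ D E A) = -Real.cos (∠ E A B + ∠ C D E) := by
  obtain ⟨σ, hσ, dB, dC, dD, dE, dA⟩ := exists_orientation hconv
  obtain ⟨q1, q2, q3, q4⟩ := hequi
  obtain ⟨r, hr⟩ : ∃ r, r = dist A B := ⟨_, rfl⟩
  have hr0 : 0 < r := by
    rw [hr, dist_pos]
    rintro rfl
    simp [det2] at dB
  obtain ⟨-, rB, sB⟩ := edge_rotation A B C r σ hr0 hσ (by linarith) (by linarith) dB
  obtain ⟨rC, -, sC⟩ := edge_rotation B C D r σ hr0 hσ (by linarith) (by linarith) dC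
  obtain ⟨rD, -, sD⟩ := edge_rotation C D E r σ hr0 hσ (by linarith) (by linarith) dD
  obtain ⟨rE, -, sE⟩ := edge_rotation D E A r σ hr0 hσ (by linarith) (by linarith) dE
  obtain ⟨-, rA, sA⟩ := edge_rotation E A B r σ hr0 hσ (by linarith) (by linarith) dA
  have hu : toC (C - B) ≠ 0 := by
    intro h
    have hCB : C - B = 0 := by
      have h0 := congrArg Complex.re h
      have h1 := congrArg Complex.im h
      ext i
      fin_cases i
      · simpa [toC] using h0
      · simpa [toC] using h1
    rw [hCB] at dC
    simp [det2] at dC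
  have hsum : toC (B - A) + toC (C - B) + toC (D - C) + toC (E - D) + toC (A - E) = 0 := by
    simp only [toC_sub]; ring
  have hβ : ∠ A B C = 2 * Real.pi - 2 * ∠ E A B := by linarith
  have hγ : ∠ B C D = 2 * Real.pi - 2 * ∠ C D E := by linarith
  rw [hβ, Real.sin_two_pi_sub, Real.sin_two_mul] at sB
  rw [hγ, Real.sin_two_pi_sub, Real.sin_two_mul] at sC
  rw [hβ, Real.sin_two_pi_sub, Real.cos_two_pi_sub, Real.sin_two_mul, Real.cos_two_mul] at rB
  rw [hγ, Real.sin_two_pi_sub, Real.cos_two_pi_sub, Real.sin_two_mul, Real.cos_two_mul] at rC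
  have tA := Real.sin_sq_add_cos_sq (∠ E A B)
  have tD := Real.sin_sq_add_cos_sq (∠ C D E)
  rw [Real.cos_add]
  generalize Real.cos (∠ E A B) = a at *
  generalize Real.sin (∠ E A B) = s at *
  generalize Real.cos (∠ C D E) = d at *
  generalize Real.sin (∠ C D E) = t at *
  generalize Real.cos (∠ D E A) = e at *
  generalize Real.sin (∠ D E A) = f at *
  generalize toC (C - B) = u at *
  -- The edges `DE` and `EA` are the edge `BC` rotated by `σ δ` and `-σ α`.
  have vD : toC (E - D) = u * ⟨d, σ * t⟩ := by
    rw [rD, rC, neg_mul u, neg_neg, mul_assoc]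
    congr 1
    apply Complex.ext <;> simp
    · linear_combination 2 * d * t ^ 2 * hσ + 2 * d * tD
    · ring
  have vE : toC (A - E) = u * ⟨a, -(σ * s)⟩ := by
    rw [rA, rB, neg_mul u, neg_neg, mul_assoc]
    congr 1
    apply Complex.ext <;> simp
    · linear_combination 2 * a * s ^ 2 * hσ + 2 * a * tA
    · ring
  have hK : (-⟨2 * a ^ 2 - 1, σ * -(2 * s * a)⟩ + 1 - ⟨2 * d ^ 2 - 1, -(σ * -(2 * t * d))⟩
      + ⟨d, σ * t⟩ + ⟨a, -(σ * s)⟩ : ℂ) = 0 := by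
    apply mul_left_cancel₀ hu
    rw [rB, rC, vD, vE] at hsum
    linear_combination hsum
  have hL : (⟨a, -(σ * s)⟩ : ℂ) = -⟨d, σ * t⟩ * ⟨e, -(σ * f)⟩ := by
    apply mul_left_cancel₀ hu
    rw [vD, vE] at rE
    linear_combination rE
  have k0 := congrArg Complex.re hK
  have k1 := congrArg Complex.im hK
  have l0 := congrArg Complex.re hL
  have l1 := congrArg Complex.im hL
  simp at k0 k1 l0 l1
  refine ⟨by linarith, ?_, by nlinarith, by nlinarith, ?_⟩
  · linear_combination σ * k1 - (2 * s * a - 2 * t * d + t - s) * hσ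
  · linear_combination d * l0 + σ * t * l1 - e * tD + s * t * hσ - e * t ^ 2 * hσ

/-- The trigonometric system forces `cos α = cos δ`: with `p = cos α`, `q = cos δ`, the asymmetric
solutions have `p + q = p q = -1/2`, so `p` and `q` would have opposite signs. -/
lemma cos_eq_and_root (p q s t : ℝ) (hs : s ^ 2 + p ^ 2 = 1) (ht : t ^ 2 + q ^ 2 = 1)
    (h1 : 2 * p ^ 2 - 1 - p + (2 * q ^ 2 - 1 - q) = 1)
    (h2 : s * (2 * p - 1) = t * (2 * q - 1)) (hp : p < 0) (hq : q < 0) :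
    p = q ∧ p = (1 - √13) / 4 := by
  have hpq : p = q := by
    by_contra hne
    have hsq : (1 - p ^ 2) * (2 * p - 1) ^ 2 = (1 - q ^ 2) * (2 * q - 1) ^ 2 := by
      linear_combination (s * (2 * p - 1) + t * (2 * q - 1)) * h2
        - (2 * p - 1) ^ 2 * hs + (2 * q - 1) ^ 2 * ht
    have hm : p + q = -1 / 2 := by
      apply mul_left_cancel₀ (sub_ne_zero.mpr hne)
      linear_combination (-1 / 2) * hsq - (p - q) * (p + q - 1 / 2) * h1
    nlinarith [mul_pos_of_neg_of_neg hp hq]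
  refine ⟨hpq, ?_⟩
  subst hpq
  have h13 : √13 ^ 2 = 13 := Real.sq_sqrt (by norm_num)
  have hfac : (p - (1 - √13) / 4) * (p - (1 + √13) / 4) = 0 := by
    linear_combination h1 / 4 - h13 / 16
  rcases mul_eq_zero.mp hfac with h | h
  · linarith
  · have := Real.sqrt_nonneg 13
    linarith

/-- Angles of a type 8 pentagon: `α = δ` and `ε` have explicit cosines. -/
lemma type8_angles (A B C D E : EuclideanSpace ℝ (Fin 2)) (hconv : ConvexPos5 A B C D E)
    (hequi : Equilateral5 A B C D E)
    (h1 : 2 * ∠ E A B + ∠ A B C = 2 * Real.pi) (h2 : 2 * ∠ C D E + ∠ B C D = 2 * Real.pi) :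
    ∠ E A B = Real.arccos ((1 - √13) / 4) ∧ ∠ C D E = Real.arccos ((1 - √13) / 4) ∧
    ∠ D E A = Real.arccos
      (-Real.cos (Real.arccos ((1 - √13) / 4) + Real.arccos ((1 - √13) / 4))) := by
  obtain ⟨k1, k2, n1, n2, k3⟩ := pentagon_relations A B C D E hconv hequi h1 h2
  obtain ⟨hpq, hp⟩ := cos_eq_and_root _ _ _ _ (Real.sin_sq_add_cos_sq _)
    (Real.sin_sq_add_cos_sq _) k1 k2 n1 n2
  have key : ∀ P Q R : EuclideanSpace ℝ (Fin 2), ∀ x : ℝ,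
      Real.cos (∠ P Q R) = x → ∠ P Q R = Real.arccos x := by
    rintro P Q R x rfl
    exact (Real.arccos_cos (EuclideanGeometry.angle_nonneg _ _ _)
      (EuclideanGeometry.angle_le_pi _ _ _)).symm
  have hα := key _ _ _ _ hp
  have hδ := key _ _ _ _ (hpq.symm.trans hp)
  refine ⟨hα, hδ, key _ _ _ _ ?_⟩
  rw [k3, hα, hδ]

theorem type8_unique_up_to_similarity
    (A B C D E A' B' C' D' E' : EuclideanSpace ℝ (Fin 2))
    (α β γ δ ε α' β' γ' δ' ε' : ℝ)
    (hconv : ConvexPos5 A B C D E) (hequi : Equilateral5 A B C D E)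
    (hα : α = ∠ E A B) (hβ : β = ∠ A B C) (hγ : γ = ∠ B C D)
    (hδ : δ = ∠ C D E) (hε : ε = ∠ D E A)
    (hconv' : ConvexPos5 A' B' C' D' E') (hequi' : Equilateral5 A' B' C' D' E')
    (hα' : α' = ∠ E' A' B') (hβ' : β' = ∠ A' B' C') (hγ' : γ' = ∠ B' C' D')
    (hδ' : δ' = ∠ C' D' E') (hε' : ε' = ∠ D' E' A')
    (h1 : 2 * α + β = 2 * Real.pi) (h2 : 2 * δ + γ = 2 * Real.pi)
    (h1' : 2 * α' + β' = 2 * Real.pi) (h2' : 2 * δ' + γ' = 2 * Real.pi) :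
    α = α' ∧ β = β' ∧ γ = γ' ∧ δ = δ' ∧ ε = ε' := by
  subst hα hβ hγ hδ hε hα' hβ' hγ' hδ' hε'
  obtain ⟨a, d, e⟩ := type8_angles A B C D E hconv hequi h1 h2
  obtain ⟨a', d', e'⟩ := type8_angles A' B' C' D' E' hconv' hequi' h1' h2'
  exact ⟨by linarith, by linarith, by linarith, by linarith, by linarith⟩
end

section
/- There exists a strictly convex equilateral pentagon ABCDE in the Euclidean plane whose interior angles α, β, γ, δ, ε satisfy 2α + β = 2π and 2δ + γ = 2π (the type 8 pentagon P8). -/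
/-!
The pentagon can be taken mirror-symmetric with unit sides: `β = γ = 2θ` and `α = δ = π - θ`,
so both angle conditions hold for every `θ`, and the angle sum forces `ε = π - 2θ`.
With base `BC = [-1/2, 1/2]` on the horizontal axis, the half-width of the pentagon at the level of
`A` and `D` is `1/2 - cos 2θ` as seen from the base and `sin (ε / 2) = cos θ` as seen from the
apex `E`. Hence `c = cos θ` must satisfy `2 c² + c = 3/2`, whose root in `(0, 1)` is
`c = (√13 - 1) / 4`. With `s = sin θ` the vertices are
`A = (-c, 2cs)`, `B = (-1/2, 0)`, `C = (1/2, 0)`, `D = (c, 2cs)`, `E = (0, 2cs + s)`.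
The angles are recovered from inner products of unit vectors, using
`arccos (-c) = π - arccos c` and `arccos (2 c² - 1) = 2 arccos c`.
-/

open EuclideanGeometry

/-- The angle at the middle vertex of two unit segments, through the coordinate inner product. -/
lemma angle_of_unit_sides (a b p q x y t : ℝ)
    (h₁ : (a - p) ^ 2 + (b - q) ^ 2 = 1) (h₂ : (x - p) ^ 2 + (y - q) ^ 2 = 1)
    (h : (a - p) * (x - p) + (b - q) * (y - q) = t) :
    ∠ (!₂[a, b] : EuclideanSpace ℝ (Fin 2)) !₂[p, q] !₂[x, y] = Real.arccos t := by
  have n₁ : ‖(!₂[a, b] : EuclideanSpace ℝ (Fin 2)) - !₂[p, q]‖ = 1 := by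
    simp [EuclideanSpace.norm_eq, Fin.sum_univ_two, h₁]
  have n₂ : ‖(!₂[x, y] : EuclideanSpace ℝ (Fin 2)) - !₂[p, q]‖ = 1 := by
    simp [EuclideanSpace.norm_eq, Fin.sum_univ_two, h₂]
  simp only [EuclideanGeometry.angle, InnerProductGeometry.angle, vsub_eq_sub, n₁, n₂]
  rw [← h]
  congr 1
  simp [PiLp.inner_apply, Fin.sum_univ_two]
  ring

lemma dist_eq_one (a b p q : ℝ) (h : (a - p) ^ 2 + (b - q) ^ 2 = 1) :
    dist (!₂[a, b] : EuclideanSpace ℝ (Fin 2)) !₂[p, q] = 1 := by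
  rw [EuclideanSpace.dist_eq, Real.sqrt_eq_one]
  simpa [Fin.sum_univ_two, Real.dist_eq] using h

lemma arccos_two_mul_sq_sub_one {c : ℝ} (h₀ : 0 ≤ c) (h₁ : c ≤ 1) :
    Real.arccos (2 * c ^ 2 - 1) = 2 * Real.arccos c := by
  have hc : Real.cos (2 * Real.arccos c) = 2 * c ^ 2 - 1 := by
    rw [Real.cos_two_mul, Real.cos_arccos (by linarith) h₁]
  rw [← hc, Real.arccos_cos]
  · linarith [Real.arccos_nonneg c]
  · linarith [Real.arccos_le_pi_div_two.2 h₀]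

/-- `c = cos θ` and `s = sin θ`, with numerical bounds sufficient for convexity. -/
lemma exists_cos_sin : ∃ c s : ℝ, 2 * c ^ 2 + c = 3 / 2 ∧ c ^ 2 + s ^ 2 = 1 ∧
    1 / 2 < c ∧ c < 1 ∧ 0 < s := by
  have h13 : √(13 : ℝ) ^ 2 = 13 := Real.sq_sqrt (by norm_num)
  have hl : 3 < √(13 : ℝ) := Real.lt_sqrt_of_sq_lt (by norm_num)
  have hu : √(13 : ℝ) < 5 := by rw [Real.sqrt_lt' (by norm_num)]; norm_num
  have hc : ((√13 - 1) / 4 : ℝ) ^ 2 < 1 := by nlinarith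
  refine ⟨(√13 - 1) / 4, √(1 - ((√13 - 1) / 4) ^ 2), by nlinarith, ?_, by linarith, by linarith,
    Real.sqrt_pos.2 (by linarith)⟩
  rw [Real.sq_sqrt (by linarith)]
  ring

theorem type8_exists :
    ∃ A B C D E : EuclideanSpace ℝ (Fin 2),
      ConvexPos5 A B C D E ∧ Equilateral5 A B C D E ∧
      2 * ∠ E A B + ∠ A B C = 2 * Real.pi ∧
      2 * ∠ C D E + ∠ B C D = 2 * Real.pi := by
  obtain ⟨c, s, hc, hs, hc₀, hc₁, hs₀⟩ := exists_cos_sin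
  have hc2 : c ^ 2 = 3 / 4 - c / 2 := by linarith
  have hs2 : s ^ 2 = 1 / 4 + c / 2 := by linarith
  have hlower : 0 < (c - 1 / 2) * s := mul_pos (by linarith) hs₀
  have lAB : (-c - -(1 / 2)) ^ 2 + (2 * c * s - 0) ^ 2 = 1 := by
    linear_combination (1 + 4 * s ^ 2) * hc2 + (3 - 2 * c) * hs2 - hc2
  have lBC : (1 / 2 - -(1 / 2) : ℝ) ^ 2 + (0 - 0 : ℝ) ^ 2 = 1 := by norm_num
  have lEA : (0 - -c) ^ 2 + (2 * c * s + s - 2 * c * s) ^ 2 = 1 := by linear_combination hs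
  have hα : ∠ (!₂[0, 2 * c * s + s] : EuclideanSpace ℝ (Fin 2)) !₂[-c, 2 * c * s] !₂[-(1 / 2), 0]
      = Real.arccos (-c) :=
    angle_of_unit_sides _ _ _ _ _ _ _ lEA (by linear_combination lAB)
      (by linear_combination hc2 - 2 * c * hs2 - hc2)
  have hβ : ∠ (!₂[-c, 2 * c * s] : EuclideanSpace ℝ (Fin 2)) !₂[-(1 / 2), 0] !₂[1 / 2, 0]
      = Real.arccos (2 * c ^ 2 - 1) :=
    angle_of_unit_sides _ _ _ _ _ _ _ lAB lBC (by linear_combination -2 * hc2)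
  have hδ : ∠ (!₂[1 / 2, 0] : EuclideanSpace ℝ (Fin 2)) !₂[c, 2 * c * s] !₂[0, 2 * c * s + s]
      = Real.arccos (-c) :=
    angle_of_unit_sides _ _ _ _ _ _ _ (by linear_combination lAB) (by linear_combination lEA)
      (by linear_combination hc2 - 2 * c * hs2 - hc2)
  have hγ : ∠ (!₂[-(1 / 2), 0] : EuclideanSpace ℝ (Fin 2)) !₂[1 / 2, 0] !₂[c, 2 * c * s]
      = Real.arccos (2 * c ^ 2 - 1) :=
    angle_of_unit_sides _ _ _ _ _ _ _ (by norm_num) (by linear_combination lAB)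
      (by linear_combination -2 * hc2)
  have hangle : 2 * Real.arccos (-c) + Real.arccos (2 * c ^ 2 - 1) = 2 * Real.pi := by
    rw [Real.arccos_neg, arccos_two_mul_sq_sub_one (by linarith) hc₁.le]
    ring
  refine ⟨!₂[-c, 2 * c * s], !₂[-(1 / 2), 0], !₂[1 / 2, 0], !₂[c, 2 * c * s],
    !₂[0, 2 * c * s + s], Or.inl ?_, ?_, by rw [hα, hβ, hangle], by rw [hδ, hγ, hangle]⟩
  · -- Every determinant is a combination of `s`, `c s` and `c² s`, so after eliminating `c² s`
    -- the bounds `s / 2 < c s < s` suffice.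
    have hupper : 0 < (1 - c) * s := mul_pos (by linarith) hs₀
    have hccs : c ^ 2 * s = (3 / 4 - c / 2) * s := by rw [hc2]
    refine ⟨?_, ?_, ?_, ?_, ?_, ?_, ?_, ?_, ?_, ?_, ?_, ?_, ?_, ?_, ?_⟩ <;>
      simp only [SLeft, det2, PiLp.sub_apply, Matrix.cons_val_zero, Matrix.cons_val_one] <;>
      linarith
  · have dAB : dist (!₂[-c, 2 * c * s] : EuclideanSpace ℝ (Fin 2)) !₂[-(1 / 2), 0] = 1 :=
      dist_eq_one _ _ _ _ (by linear_combination lAB)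
    have dBC : dist (!₂[-(1 / 2), 0] : EuclideanSpace ℝ (Fin 2)) !₂[1 / 2, 0] = 1 :=
      dist_eq_one _ _ _ _ (by norm_num)
    have dCD : dist (!₂[1 / 2, 0] : EuclideanSpace ℝ (Fin 2)) !₂[c, 2 * c * s] = 1 :=
      dist_eq_one _ _ _ _ (by linear_combination lAB)
    have dDE : dist (!₂[c, 2 * c * s] : EuclideanSpace ℝ (Fin 2)) !₂[0, 2 * c * s + s] = 1 :=
      dist_eq_one _ _ _ _ (by linear_combination hs)
    have dEA : dist (!₂[0, 2 * c * s + s] : EuclideanSpace ℝ (Fin 2)) !₂[-c, 2 * c * s] = 1 :=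
      dist_eq_one _ _ _ _ (by linear_combination hs)
    exact ⟨by rw [dAB, dBC], by rw [dBC, dCD], by rw [dCD, dDE], by rw [dDE, dEA]⟩
end

section
/- There exists a strictly convex equilateral pentagon ABCDE in the Euclidean plane whose interior angles α, β, γ, δ, ε satisfy 2β + γ = 2π and 2δ + α = 2π (the type 7 pentagon P7). -/
/-!
Write `b = π - β` and `d = π - δ` for the exterior angles at `B` and `D`. The two angle conditions
say that the interior angles at `C` and `A` are `2b` and `2d`, so with unit sides and `A` at the
origin the edge vectors are, in complex notation,
`1`, `exp(ib)`, `-exp(-ib)`, `-exp(it)`, `-exp(2id)`, where `t = d - b`. The polygon closes up iff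
`cos t = 1 - cos 2d = 2 sin² d` and `2 sin b = sin t + sin 2d`.

Put `x = sin d`. The first equation determines `t` from `x`, hence also `b = d - t`, and the second
becomes one continuous equation in `x`, which changes sign between `x = 0.7` and `x = 0.707`
(`exists_params`, by the intermediate value theorem). With
`y = cos d`, `c = cos t`, `s = sin t`, `p = cos b`, `q = sin b`, the pentagon is
`(0,0), (1,0), (1+p,q), (1,2q), (1-c,2q-s)`. Crude bounds on the parameters give convexity, and
the angles are read off from their cosines.
-/

open EuclideanGeometry

/-- The closing conditions of the pentagon, with `(y, x)`, `(c, s)`, `(p, q)` the cosine and sine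
of `d`, `t` and `b = d - t`. -/
lemma exists_params : ∃ x y c s p q : ℝ, 0.7 ≤ x ∧ x ≤ 0.707 ∧ 0 ≤ y ∧ 0 ≤ s ∧
    x ^ 2 + y ^ 2 = 1 ∧ c = 2 * x ^ 2 ∧ c ^ 2 + s ^ 2 = 1 ∧
    p = y * c + x * s ∧ q = x * c - y * s ∧ 2 * q = s + 2 * x * y := by
  let Y : ℝ → ℝ := fun x => √(1 - x ^ 2)
  let S : ℝ → ℝ := fun x => √(1 - (2 * x ^ 2) ^ 2)
  let G : ℝ → ℝ := fun x => 2 * (x * (2 * x ^ 2) - Y x * S x) - S x - 2 * x * Y x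
  have hG : ContinuousOn G (Set.Icc 0.7 0.707) := by
    apply Continuous.continuousOn
    fun_prop
  have h1 : G 0.7 ≤ 0 := by
    have hy : (0.714 : ℝ) ≤ Y 0.7 := Real.le_sqrt_of_sq_le (by norm_num)
    have hs : (0.198 : ℝ) ≤ S 0.7 := Real.le_sqrt_of_sq_le (by norm_num)
    simp only [G]
    nlinarith [mul_nonneg (sub_nonneg.2 hy) (sub_nonneg.2 hs)]
  have h2 : 0 ≤ G 0.707 := by
    have hy : Y 0.707 ≤ 0.71 := Real.sqrt_le_iff.2 (by norm_num)
    have hs : S 0.707 ≤ 0.03 := Real.sqrt_le_iff.2 (by norm_num)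
    have hs0 : 0 ≤ S 0.707 := Real.sqrt_nonneg _
    simp only [G]
    nlinarith [mul_nonneg (sub_nonneg.2 hy) hs0]
  obtain ⟨x, ⟨hx1, hx2⟩, hx⟩ :=
    intermediate_value_Icc (by norm_num : (0.7 : ℝ) ≤ 0.707) hG ⟨h1, h2⟩
  have hxx : x ^ 2 ≤ 0.5 := by nlinarith
  have hY : Y x ^ 2 = 1 - x ^ 2 := Real.sq_sqrt (by linarith)
  have hS : S x ^ 2 = 1 - (2 * x ^ 2) ^ 2 := Real.sq_sqrt (by nlinarith [sq_nonneg x])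
  refine ⟨x, Y x, 2 * x ^ 2, S x, _, _, hx1, hx2, Real.sqrt_nonneg _, Real.sqrt_nonneg _,
    by linarith, rfl, by linarith, rfl, rfl, ?_⟩
  simp only [G] at hx
  linarith

/-- Angle between two vectors on the unit circle, read off from its cosine. -/
lemma angle_eq_of_coords (P Q R : EuclideanSpace ℝ (Fin 2)) (θ : ℝ) (h0 : 0 ≤ θ)
    (hpi : θ ≤ Real.pi) (h1 : dist P Q = 1) (h2 : dist R Q = 1)
    (h : (P 0 - Q 0) * (R 0 - Q 0) + (P 1 - Q 1) * (R 1 - Q 1) = Real.cos θ) :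
    ∠ P Q R = θ := by
  rw [dist_eq_norm] at h1 h2
  unfold EuclideanGeometry.angle InnerProductGeometry.angle
  simp only [vsub_eq_sub]
  rw [h1, h2, ← Real.arccos_cos h0 hpi, ← h]
  congr 1
  simp [PiLp.inner_apply, Fin.sum_univ_two]
  ring

lemma dist_eq_one_of_coords (P Q : EuclideanSpace ℝ (Fin 2))
    (h : (P 0 - Q 0) ^ 2 + (P 1 - Q 1) ^ 2 = 1) : dist P Q = 1 := by
  rw [EuclideanSpace.dist_eq, Fin.sum_univ_two, Real.dist_eq, Real.dist_eq, sq_abs, sq_abs, h,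
    Real.sqrt_one]

theorem type7_exists :
    ∃ A B C D E : EuclideanSpace ℝ (Fin 2),
      ConvexPos5 A B C D E ∧ Equilateral5 A B C D E ∧
      2 * ∠ A B C + ∠ B C D = 2 * Real.pi ∧
      2 * ∠ C D E + ∠ E A B = 2 * Real.pi := by
  obtain ⟨x, y, c, s, p, q, hx1, hx2, hy, hs, hxy, hc, hcs, hp, hq, hcl⟩ := exists_params
  have hy1 : 0.7 ≤ y := by nlinarith
  have hy2 : y ≤ 0.715 := by nlinarith
  have hc1 : 0.98 ≤ c := by nlinarith
  have hc2 : c ≤ 1 := by nlinarith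
  have hs2 : s ≤ 0.2 := by nlinarith
  have hq1 : 0.49 ≤ q := by nlinarith [mul_nonneg (sub_nonneg.2 hx1) (sub_nonneg.2 hy1)]
  have hq2 : q ≤ 0.7 := by nlinarith [sq_nonneg (x - y)]
  have hpq : p ^ 2 + q ^ 2 = 1 := by
    have : p ^ 2 + q ^ 2 = (x ^ 2 + y ^ 2) * (c ^ 2 + s ^ 2) := by rw [hp, hq]; ring
    rw [this, hxy, hcs, one_mul]
  have hp1 : 0.6 ≤ p := by
    have : 0 ≤ x * s := mul_nonneg (by linarith) hs
    nlinarith only [mul_nonneg (sub_nonneg.2 hy1) (sub_nonneg.2 hc1), this, hp, hy1, hc1]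
  -- the vertex `E` is `exp(2id)`
  have hE1 : 1 - c = y ^ 2 - x ^ 2 := by linarith
  have hE2 : 2 * q - s = 2 * x * y := by linarith
  -- `cos d = cos (b + t)`
  have hyd : p * c - q * s = y := by
    have : p * c - q * s = y * (c ^ 2 + s ^ 2) := by rw [hp, hq]; ring
    rw [this, hcs, mul_one]
  have hpc : 0 < p * q := by positivity
  have hqc : 0.48 ≤ q * c := by
    nlinarith only [mul_nonneg (sub_nonneg.2 hq1) (sub_nonneg.2 hc1), hq1, hc1]
  have hps : 0 ≤ p * s := mul_nonneg (by linarith) hs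
  have hpqs : 0 ≤ p * (2 * q - s) := mul_nonneg (by linarith) (by linarith)
  let A : EuclideanSpace ℝ (Fin 2) := !₂[0, 0]
  let B : EuclideanSpace ℝ (Fin 2) := !₂[1, 0]
  let C : EuclideanSpace ℝ (Fin 2) := !₂[1 + p, q]
  let D : EuclideanSpace ℝ (Fin 2) := !₂[1, 2 * q]
  let E : EuclideanSpace ℝ (Fin 2) := !₂[1 - c, 2 * q - s]
  have dAB : dist A B = 1 := dist_eq_one_of_coords _ _ (by simp [A, B])
  have dBC : dist B C = 1 := dist_eq_one_of_coords _ _ (by simp [B, C]; linarith)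
  have dCD : dist C D = 1 := dist_eq_one_of_coords _ _ (by simp [C, D]; linarith)
  have dDE : dist D E = 1 := dist_eq_one_of_coords _ _ (by simp [D, E]; linarith)
  have dEA : dist E A = 1 := dist_eq_one_of_coords _ _ (by
    simp only [E, A, PiLp.toLp_apply, Matrix.cons_val_zero, Matrix.cons_val_one, sub_zero]
    rw [hE1, hE2]
    linear_combination (x ^ 2 + y ^ 2 + 1) * hxy)
  -- the exterior angles `b` and `d`
  let b := Real.arcsin q
  let d := Real.arcsin x
  have sinb : Real.sin b = q := Real.sin_arcsin (by linarith) (by linarith)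
  have sind : Real.sin d = x := Real.sin_arcsin (by linarith) (by linarith)
  have cosb : Real.cos b = p := by
    rw [Real.cos_arcsin, show 1 - q ^ 2 = p ^ 2 by linarith, Real.sqrt_sq (by linarith)]
  have cosd : Real.cos d = y := by
    rw [Real.cos_arcsin, show 1 - x ^ 2 = y ^ 2 by linarith, Real.sqrt_sq hy]
  have hb0 : 0 ≤ b := Real.arcsin_nonneg.2 (by linarith)
  have hd0 : 0 ≤ d := Real.arcsin_nonneg.2 (by linarith)
  have hb1 : b ≤ Real.pi / 2 := Real.arcsin_le_pi_div_two _
  have hd1 : d ≤ Real.pi / 2 := Real.arcsin_le_pi_div_two _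
  have aB : ∠ A B C = Real.pi - b :=
    angle_eq_of_coords _ _ _ _ (by linarith) (by linarith) dAB (dist_comm B C ▸ dBC) (by
      rw [Real.cos_pi_sub, cosb]; simp [A, B, C])
  have aC : ∠ B C D = 2 * b :=
    angle_eq_of_coords _ _ _ _ (by linarith) (by linarith) dBC (dist_comm C D ▸ dCD) (by
      rw [Real.cos_two_mul, cosb]; simp [B, C, D]; linarith)
  have aD : ∠ C D E = Real.pi - d :=
    angle_eq_of_coords _ _ _ _ (by linarith) (by linarith) dCD (dist_comm D E ▸ dDE) (by
      rw [Real.cos_pi_sub, cosd]; simp [C, D, E]; linarith)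
  have aA : ∠ E A B = 2 * d :=
    angle_eq_of_coords _ _ _ _ (by linarith) (by linarith) dEA (dist_comm A B ▸ dAB) (by
      rw [Real.cos_two_mul, cosd]; simp [A, B, E]; linarith)
  refine ⟨A, B, C, D, E, Or.inl ?_, ⟨?_, ?_, ?_, ?_⟩, ?_, ?_⟩
  · simp only [CcwConvex5, SLeft, det2, A, B, C, D, E, PiLp.sub_apply, PiLp.toLp_apply,
      Matrix.cons_val_zero, Matrix.cons_val_one]
    refine ⟨?_, ?_, ?_, ?_, ?_, ?_, ?_, ?_, ?_, ?_, ?_, ?_, ?_, ?_, ?_⟩ <;> linarith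
  · rw [dAB, dBC]
  · rw [dBC, dCD]
  · rw [dCD, dDE]
  · rw [dDE, dEA]
  · rw [aB, aC]; ring
  · rw [aD, aA]; ring
end

section
/- The strictly convex equilateral pentagon of type 7 is unique up to similarity: if ABCDE and A'B'C'D'E' are strictly convex equilateral pentagons whose interior angles satisfy 2β + γ = 2π, 2δ + α = 2π and 2β' + γ' = 2π, 2δ' + α' = 2π respectively, then the corresponding interior angles agree: α = α', β = β', γ = γ', δ = δ', ε = ε'. -/
/-!
Write the edges of a pentagon as complex numbers `u₁ = AB, …, u₅ = EA` of common length, and put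
`b = e^{iβ}`, `d = e^{iδ}` (conjugated when the pentagon is clockwise). Turning at each vertex
multiplies an edge by minus the conjugate of the angle's exponential, so the two angle conditions
give `u₂ = -b̄ u₁`, `u₃ = b u₁`, `u₄ = -d̄ b u₁`, `u₅ = -d̄² u₁`. Closing up, `∑ uᵢ = 0`, is a
complex equation which is linear in `b` and its conjugate. Solving it with `c = cos δ` gives
`(1 - 2c) cos β = -4 sin² δ` and `(1 - 2c) sin β = 2 sin δ`, whence the quartic
`16 c⁴ - 40 c² + 4 c + 19 = 0`. Since `α ≤ π` forces `δ ≥ π/2`, `c` lies in `[-1, 0]`, where the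
quartic is strictly increasing (`quartic_injective`). So `c` is determined, hence `δ` and `β`,
hence `α` and `γ`, and finally `ε` through `cos ε = -cos (β + δ)`, which is the turning relation
at `E`.
-/


open EuclideanGeometry

/-- The turn at `Q` of an equilateral path `P, Q, R`: the edge `QR` is `PQ` multiplied by
`-e^{-isθ}`, where `θ = ∠ P Q R` and `s = ±1` is the orientation of the triangle. -/
lemma edge_turn (P Q R : EuclideanSpace ℝ (Fin 2)) (s : ℝ) (hs : s ^ 2 = 1)
    (hleft : 0 < s * det2 (Q - P) (R - P)) (hd : dist P Q = dist Q R) :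
    R 0 - Q 0 = -Real.cos (∠ P Q R) * (Q 0 - P 0) - s * Real.sin (∠ P Q R) * (Q 1 - P 1) ∧
    R 1 - Q 1 = s * Real.sin (∠ P Q R) * (Q 0 - P 0) - Real.cos (∠ P Q R) * (Q 1 - P 1) := by
  have hcos := InnerProductGeometry.cos_angle_mul_norm_mul_norm (P -ᵥ Q) (R -ᵥ Q)
  have hsin : 0 ≤ Real.sin (∠ P Q R) := InnerProductGeometry.sin_angle_nonneg _ _
  have hpyth := Real.sin_sq_add_cos_sq (∠ P Q R)
  rw [← dist_eq_norm_vsub, ← dist_eq_norm_vsub, dist_comm R Q, ← hd] at hcos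
  have hr1 : dist P Q ^ 2 = (P 0 - Q 0) ^ 2 + (P 1 - Q 1) ^ 2 := by
    rw [EuclideanSpace.dist_eq, Real.sq_sqrt (by positivity)]
    simp [Fin.sum_univ_two, Real.dist_eq, sq_abs]
  have hr2 : dist P Q ^ 2 = (Q 0 - R 0) ^ 2 + (Q 1 - R 1) ^ 2 := by
    rw [hd, EuclideanSpace.dist_eq, Real.sq_sqrt (by positivity)]
    simp [Fin.sum_univ_two, Real.dist_eq, sq_abs]
  change Real.cos (∠ P Q R) * _ = _ at hcos
  simp only [det2, vsub_eq_sub, PiLp.inner_apply, Fin.sum_univ_two, PiLp.sub_apply,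
    RCLike.inner_apply, conj_trivial] at hleft hcos
  generalize Real.cos (∠ P Q R) = c at *
  generalize Real.sin (∠ P Q R) = t at *
  generalize dist P Q = r at *
  obtain ⟨x, hx⟩ : ∃ x, x = Q 0 - P 0 := ⟨_, rfl⟩
  obtain ⟨y, hy⟩ : ∃ y, y = Q 1 - P 1 := ⟨_, rfl⟩
  obtain ⟨v, hv⟩ : ∃ v, v = R 0 - Q 0 := ⟨_, rfl⟩
  obtain ⟨w, hw⟩ : ∃ w, w = R 1 - Q 1 := ⟨_, rfl⟩
  rw [show R 0 - P 0 = x + v by linarith, show R 1 - P 1 = y + w by linarith, ← hx, ← hy] at hleft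
  rw [show P 0 - Q 0 = -x by linarith, show P 1 - Q 1 = -y by linarith] at hcos hr1
  rw [show Q 0 - R 0 = -v by linarith, show Q 1 - R 1 = -w by linarith] at hr2
  rw [← hv, ← hw] at hcos ⊢
  rw [← hx, ← hy]
  have hcos' : c * r ^ 2 = -(x * v + y * w) := by linear_combination hcos
  have hleft' : 0 < s * (x * w - y * v) := by linarith
  have hr0 : r ^ 2 ≠ 0 := by
    intro h
    have h1 : x = 0 := by nlinarith
    have h2 : y = 0 := by nlinarith
    simp [h1, h2] at hleft'
  -- Lagrange's identity gives the square of the sine; its sign is that of `s * det`.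
  have hsin' : t * r ^ 2 = s * (x * w - y * v) := by
    have hsq : (t * r ^ 2) ^ 2 = (s * (x * w - y * v)) ^ 2 := by
      have hlag : r ^ 2 * r ^ 2 = (x * v + y * w) ^ 2 + (x * w - y * v) ^ 2 := by
        nth_rewrite 1 [hr1]
        rw [hr2]; ring
      have hc2 : (c * r ^ 2) ^ 2 = (x * v + y * w) ^ 2 := by rw [hcos']; ring
      linear_combination r ^ 4 * hpyth - hc2 + hlag - (x * w - y * v) ^ 2 * hs
    exact (sq_eq_sq₀ (by positivity) hleft'.le).1 hsq
  constructor
  · apply mul_left_cancel₀ hr0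
    linear_combination x * hcos' + s * y * hsin' + v * hr1 + y * (x * w - y * v) * hs
  · apply mul_left_cancel₀ hr0
    linear_combination y * hcos' - s * x * hsin' + w * hr1 - x * (x * w - y * v) * hs

/-- The quartic satisfied by `cos δ` has at most one root in `[-1, 0]`. -/
lemma quartic_injective {x y : ℝ} (hx : -1 ≤ x) (hx0 : x ≤ 0) (hy : -1 ≤ y) (hy0 : y ≤ 0)
    (h : 16 * x ^ 4 - 40 * x ^ 2 + 4 * x + 19 = 0)
    (h' : 16 * y ^ 4 - 40 * y ^ 2 + 4 * y + 19 = 0) : x = y := by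
  have hprod : (x - y) * ((-(x + y)) * (40 - 16 * (x ^ 2 + y ^ 2)) + 4) = 0 := by
    linear_combination h - h'
  have hpos : 0 < (-(x + y)) * (40 - 16 * (x ^ 2 + y ^ 2)) + 4 := by
    have : 0 ≤ (-(x + y)) * (40 - 16 * (x ^ 2 + y ^ 2)) :=
      mul_nonneg (by linarith) (by nlinarith)
    linarith
  rcases mul_eq_zero.1 hprod with h | h
  · linarith
  · exact absurd h hpos.ne'

/-- The closing condition in coordinates, with first edge `(x, y)`, solved for `cos β` and `cos δ`;
here `(cb, sb)` and `(cd, sd)` are the cosine and oriented sine of `β` and `δ`. -/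
lemma closing_solve {x y cb sb cd sd : ℝ} (hne : x ^ 2 + y ^ 2 ≠ 0)
    (hb : cb ^ 2 + sb ^ 2 = 1) (hd : cd ^ 2 + sd ^ 2 = 1)
    (h0 : (1 - (cb * cd + sb * sd) - (cd ^ 2 - sd ^ 2)) * x
      - (2 * sb - (sb * cd - cb * sd) + 2 * sd * cd) * y = 0)
    (h1 : (1 - (cb * cd + sb * sd) - (cd ^ 2 - sd ^ 2)) * y
      + (2 * sb - (sb * cd - cb * sd) + 2 * sd * cd) * x = 0) :
    cb * (1 - 2 * cd) = -4 * (1 - cd ^ 2) ∧ 16 * cd ^ 4 - 40 * cd ^ 2 + 4 * cd + 19 = 0 := by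
  have hre : 1 - (cb * cd + sb * sd) - (cd ^ 2 - sd ^ 2) = 0 := by
    apply mul_left_cancel₀ hne
    linear_combination x * h0 + y * h1
  have him : 2 * sb - (sb * cd - cb * sd) + 2 * sd * cd = 0 := by
    apply mul_left_cancel₀ hne
    linear_combination x * h1 - y * h0
  have hcb : cb * (1 - 2 * cd) = -4 * sd ^ 2 := by
    linear_combination (2 - cd) * hre + sd * him - (cb - 2 + cd) * hd
  have hsb : sb * (1 - 2 * cd) = 2 * sd := by
    linear_combination (-sd) * hre - cd * him - (sb - sd) * hd
  refine ⟨by linear_combination hcb - 4 * hd, ?_⟩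
  -- `(cos² β + sin² β) (1 - 2c)² = 16 sin⁴ δ + 4 sin² δ`
  have hsq : (1 - 2 * cd) ^ 2 = 16 * (sd ^ 2) ^ 2 + 4 * sd ^ 2 := by
    have e1 : (cb * (1 - 2 * cd)) ^ 2 = (-4 * sd ^ 2) ^ 2 := by rw [hcb]
    have e2 : (sb * (1 - 2 * cd)) ^ 2 = (2 * sd) ^ 2 := by rw [hsb]
    linear_combination e1 + e2 - (1 - 2 * cd) ^ 2 * hb
  rw [show sd ^ 2 = 1 - cd ^ 2 by linarith] at hsq
  linear_combination -hsq

/-- The trigonometric relations that determine the angles of a type 7 pentagon: `δ` is obtuse or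
right, `β` is a function of `δ`, `cos δ` is a root of the quartic, and `ε` depends on `β + δ`. -/
lemma type7_angles (A B C D E : EuclideanSpace ℝ (Fin 2))
    (hconv : ConvexPos5 A B C D E) (hequi : Equilateral5 A B C D E)
    (h1 : 2 * ∠ A B C + ∠ B C D = 2 * Real.pi) (h2 : 2 * ∠ C D E + ∠ E A B = 2 * Real.pi) :
    Real.cos (∠ C D E) ≤ 0 ∧
    Real.cos (∠ A B C) * (1 - 2 * Real.cos (∠ C D E)) = -4 * (1 - Real.cos (∠ C D E) ^ 2) ∧
    16 * Real.cos (∠ C D E) ^ 4 - 40 * Real.cos (∠ C D E) ^ 2 + 4 * Real.cos (∠ C D E) + 19 = 0 ∧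
    Real.cos (∠ D E A) = -Real.cos (∠ A B C + ∠ C D E) := by
  obtain ⟨s, hs, hB, hC, hD, hE, hA⟩ : ∃ s : ℝ, s ^ 2 = 1 ∧
      0 < s * det2 (B - A) (C - A) ∧ 0 < s * det2 (C - B) (D - B) ∧
      0 < s * det2 (D - C) (E - C) ∧ 0 < s * det2 (E - D) (A - D) ∧
      0 < s * det2 (A - E) (B - E) := by
    rcases hconv with h | h
    · obtain ⟨k1, -, -, k2, -, -, k3, -, -, k4, -, -, k5, -, -⟩ := h
      exact ⟨1, by norm_num, by simpa [SLeft] using k1, by simpa [SLeft] using k2, by simpa [SLeft] using k3,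
        by simpa [SLeft] using k4, by simpa [SLeft] using k5⟩
    · obtain ⟨k1, -, -, k2, -, -, k3, -, -, k4, -, -, k5, -, -⟩ := h
      simp only [SLeft, det2, PiLp.sub_apply] at k1 k2 k3 k4 k5
      refine ⟨-1, by norm_num, ?_, ?_, ?_, ?_, ?_⟩ <;> simp only [det2, PiLp.sub_apply] <;>
        linarith
  obtain ⟨e1, e2, e3, e4⟩ := hequi
  obtain ⟨b0, b1⟩ := edge_turn A B C s hs hB e1
  obtain ⟨c0, c1⟩ := edge_turn B C D s hs hC e2
  obtain ⟨d0, d1⟩ := edge_turn C D E s hs hD e3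
  obtain ⟨f0, f1⟩ := edge_turn D E A s hs hE e4
  obtain ⟨a0, a1⟩ := edge_turn E A B s hs hA (by rw [← e4, ← e3, ← e2, ← e1])
  have hαle := EuclideanGeometry.angle_le_pi E A B
  have hδle := EuclideanGeometry.angle_le_pi C D E
  have hne : (B 0 - A 0) ^ 2 + (B 1 - A 1) ^ 2 ≠ 0 := by
    intro h
    rw [add_eq_zero_iff_of_nonneg (sq_nonneg _) (sq_nonneg _), sq_eq_zero_iff,
      sq_eq_zero_iff] at h
    simp [det2, h.1, h.2] at hB
  have hγ : ∠ B C D = 2 * Real.pi - 2 * ∠ A B C := by linarith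
  have hα : ∠ E A B = 2 * Real.pi - 2 * ∠ C D E := by linarith
  have hpb := Real.cos_sq_add_sin_sq (∠ A B C)
  have hpd := Real.cos_sq_add_sin_sq (∠ C D E)
  rw [hγ, Real.cos_two_pi_sub, Real.sin_two_pi_sub, Real.cos_two_mul, Real.sin_two_mul] at c0 c1
  rw [hα, Real.cos_two_pi_sub, Real.sin_two_pi_sub, Real.cos_two_mul, Real.sin_two_mul] at a0 a1
  refine ⟨Real.cos_nonpos_of_pi_div_two_le_of_le (by linarith) (by linarith [Real.pi_pos]), ?_⟩
  rw [Real.cos_add]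
  generalize Real.cos (∠ A B C) = cb at *
  generalize Real.sin (∠ A B C) = tb at *
  generalize Real.cos (∠ C D E) = cd at *
  generalize Real.sin (∠ C D E) = td at *
  generalize Real.cos (∠ D E A) = ce at *
  generalize Real.sin (∠ D E A) = te at *
  obtain ⟨x, hx⟩ : ∃ x, x = B 0 - A 0 := ⟨_, rfl⟩
  obtain ⟨y, hy⟩ : ∃ y, y = B 1 - A 1 := ⟨_, rfl⟩
  rw [← hx, ← hy] at b0 b1 hne
  rw [← hx] at a0
  rw [← hy] at a1
  have hpb' : cb ^ 2 + (s * tb) ^ 2 = 1 := by linear_combination hpb + tb ^ 2 * hs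
  have hpd' : cd ^ 2 + (s * td) ^ 2 = 1 := by linear_combination hpd + td ^ 2 * hs
  have htt : tb * td = (s * tb) * (s * td) := by linear_combination -tb * td * hs
  rw [show s * -(2 * tb * cb) = -(2 * (s * tb) * cb) by ring] at c0 c1
  rw [show s * -(2 * td * cd) = -(2 * (s * td) * cd) by ring] at a0 a1
  rw [htt]
  generalize s * tb = sb at *
  generalize s * td = sd at *
  generalize s * te = se at *
  -- The edges `CD`, `EA`, `DE` in terms of `AB = (x, y)`.
  have g0 : D 0 - C 0 = cb * x - sb * y := by
    rw [c0, b0, b1]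
    linear_combination 2 * cb * x * hpb'
  have g1 : D 1 - C 1 = sb * x + cb * y := by
    rw [c1, b0, b1]
    linear_combination 2 * cb * y * hpb'
  have hPQ : (2 * cd ^ 2 - 1) ^ 2 + (2 * sd * cd) ^ 2 = 1 := by
    linear_combination 4 * cd ^ 2 * hpd'
  have k0 : A 0 - E 0 = -(2 * cd ^ 2 - 1) * x - 2 * sd * cd * y := by
    linear_combination (2 * cd ^ 2 - 1) * a0 + 2 * sd * cd * a1 - (A 0 - E 0) * hPQ
  have k1 : A 1 - E 1 = 2 * sd * cd * x - (2 * cd ^ 2 - 1) * y := by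
    linear_combination -(2 * sd * cd) * a0 + (2 * cd ^ 2 - 1) * a1 - (A 1 - E 1) * hPQ
  have m0 : E 0 - D 0 = -((cd * cb + sd * sb) * x - (cd * sb - sd * cb) * y) := by
    rw [d0, g0, g1]; ring
  have m1 : E 1 - D 1 = -((cd * sb - sd * cb) * x + (cd * cb + sd * sb) * y) := by
    rw [d1, g0, g1]; ring
  have hclose := closing_solve (x := x) (y := y) hne hpb' hpd'
    (by linear_combination hx - b0 - g0 - m0 - k0 + x * hpd')
    (by linear_combination hy - b1 - g1 - m1 - k1 + y * hpd')
  refine ⟨hclose.1, hclose.2, ?_⟩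
  have hMN : (cd * cb + sd * sb) ^ 2 + (cd * sb - sd * cb) ^ 2 = 1 := by
    linear_combination (cd ^ 2 + sd ^ 2) * hpb' + hpd'
  have hnorm : (E 0 - D 0) ^ 2 + (E 1 - D 1) ^ 2 = x ^ 2 + y ^ 2 := by
    rw [m0, m1]
    linear_combination (x ^ 2 + y ^ 2) * hMN
  have hinner : (A 0 - E 0) * (E 0 - D 0) + (A 1 - E 1) * (E 1 - D 1)
      = (cb * cd - sb * sd) * (x ^ 2 + y ^ 2) := by
    rw [k0, k1, m0, m1]
    linear_combination 2 * cb * cd * (x ^ 2 + y ^ 2) * hpd'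
  apply mul_left_cancel₀ hne
  linear_combination (E 0 - D 0) * f0 + (E 1 - D 1) * f1 - ce * hnorm - hinner

theorem type7_unique_up_to_similarity
    (A B C D E A' B' C' D' E' : EuclideanSpace ℝ (Fin 2))
    (α β γ δ ε α' β' γ' δ' ε' : ℝ)
    (hconv : ConvexPos5 A B C D E) (hequi : Equilateral5 A B C D E)
    (hα : α = ∠ E A B) (hβ : β = ∠ A B C) (hγ : γ = ∠ B C D)
    (hδ : δ = ∠ C D E) (hε : ε = ∠ D E A)
    (hconv' : ConvexPos5 A' B' C' D' E') (hequi' : Equilateral5 A' B' C' D' E')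
    (hα' : α' = ∠ E' A' B') (hβ' : β' = ∠ A' B' C') (hγ' : γ' = ∠ B' C' D')
    (hδ' : δ' = ∠ C' D' E') (hε' : ε' = ∠ D' E' A')
    (h1 : 2 * β + γ = 2 * Real.pi) (h2 : 2 * δ + α = 2 * Real.pi)
    (h1' : 2 * β' + γ' = 2 * Real.pi) (h2' : 2 * δ' + α' = 2 * Real.pi) :
    α = α' ∧ β = β' ∧ γ = γ' ∧ δ = δ' ∧ ε = ε' := by
  subst hα hβ hγ hδ hε hα' hβ' hγ' hδ' hε'
  obtain ⟨hc, hb, hq, he⟩ := type7_angles A B C D E hconv hequi h1 h2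
  obtain ⟨hc', hb', hq', he'⟩ := type7_angles A' B' C' D' E' hconv' hequi' h1' h2'
  have mem : ∀ P Q R : EuclideanSpace ℝ (Fin 2), ∠ P Q R ∈ Set.Icc 0 Real.pi := fun P Q R =>
    ⟨EuclideanGeometry.angle_nonneg P Q R, EuclideanGeometry.angle_le_pi P Q R⟩
  have hcd := quartic_injective (Real.neg_one_le_cos _) hc (Real.neg_one_le_cos _) hc' hq hq'
  have hδ : ∠ C D E = ∠ C' D' E' := Real.injOn_cos (mem C D E) (mem C' D' E') hcd
  have hβ : ∠ A B C = ∠ A' B' C' := by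
    apply Real.injOn_cos (mem A B C) (mem A' B' C')
    rw [← hδ] at hb' hc'
    have hnz : 1 - 2 * Real.cos (∠ C D E) ≠ 0 := by linarith
    exact mul_right_cancel₀ hnz (hb.trans hb'.symm)
  have hε : ∠ D E A = ∠ D' E' A' := by
    apply Real.injOn_cos (mem D E A) (mem D' E' A')
    rw [he, he', hδ, hβ]
  exact ⟨by linarith, hβ, by linarith, hδ, hε⟩
end

section
/- Let ABCDE be a strictly convex equilateral pentagon with unit side length whose interior angles satisfy 2β + γ = 2π and 2δ + α = 2π (type 7 conditions). Then the diagonal length dist(B, D) lies strictly between 1 and √3. -/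
/-!
Put `g = π - β` and `a = π - δ`, so that `γ = 2g` and `α = 2a`. Walking around the pentagon, the
edges `AB, BC, CD, DE, EA` point in the directions `0, g, π - g, π - g + a, π + 2a`, and closing up
means
`cos (a - g) = 1 - cos 2a = 2 sin² a` and `2 sin g = sin (a - g) + sin 2a`
(`closing_equations`), while `BD = 2 sin g`.

If `g ≥ a`, the second equation gives `2 sin g ≤ sin 2a < 2 sin a ≤ 2 sin g`, which is absurd. So
`g < a`, and `2 sin² a = cos (a - g) ≤ 1` gives `BD² = 4 sin² g < 4 sin² a ≤ 2 < 3`.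
With `X = cos (a - g) = 1 - cos 2a ∈ (0, 1)`, one has `sin (a - g) = √(1 - X²) > 1 - X` and
`sin 2a = √(1 - (1 - X)²) > X`, whence `BD = 2 sin g > 1` (`sine_bounds`).
-/

open EuclideanGeometry

/-- The trigonometric core, with `sg, cg, sa, ca` standing for the sines and cosines of `g` and
`a`: the closing equations force `1 < (2 sin g)² < 3`. -/
lemma sine_bounds {sg cg sa ca : ℝ} (hsg : 0 < sg) (hcg : 0 < cg) (hsa : 0 < sa) (hca : 0 < ca)
    (hg : sg ^ 2 + cg ^ 2 = 1) (ha : sa ^ 2 + ca ^ 2 = 1)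
    (hre : ca * cg + sa * sg = 2 * sa ^ 2)
    (him : 2 * sg = sa * cg - ca * sg + 2 * sa * ca) :
    1 < 4 * sg ^ 2 ∧ 4 * sg ^ 2 < 3 := by
  have hca1 : ca < 1 := by nlinarith
  have hlt : sg < sa := by
    by_contra! h
    have hsq : sa ^ 2 ≤ sg ^ 2 := pow_le_pow_left₀ hsa.le h 2
    have hc : cg ≤ ca := (sq_le_sq₀ hcg.le hca.le).mp (by linarith)
    have h1 : sa * cg ≤ sg * ca := mul_le_mul h hc hcg.le hsg.le
    have h2 : sa * ca < sa * 1 := mul_lt_mul_of_pos_left hca1 hsa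
    linarith
  have hsq : sg ^ 2 < sa ^ 2 := pow_lt_pow_left₀ hlt hsg.le two_ne_zero
  have hclt : ca < cg := lt_of_pow_lt_pow_left₀ 2 hcg.le (by linarith)
  have hT : 0 < sa * cg - ca * sg := by
    have := mul_lt_mul'' hclt hlt hca.le hsg.le
    linarith
  have hTX : (sa * cg - ca * sg) ^ 2 + (2 * sa ^ 2) ^ 2 = 1 := by
    rw [← hre]
    linear_combination (sg ^ 2 + cg ^ 2) * ha + hg
  have hS : (2 * sa * ca) ^ 2 + (1 - 2 * sa ^ 2) ^ 2 = 1 := by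
    linear_combination 4 * sa ^ 2 * ha
  have hX0 : 0 < 2 * sa ^ 2 := by positivity
  have hS0 : 0 < 2 * sa * ca := by positivity
  have hX1 : 2 * sa ^ 2 < 1 :=
    lt_of_pow_lt_pow_left₀ 2 zero_le_one (by linarith [pow_pos hT 2])
  have hprod : 0 < 2 * sa ^ 2 * (1 - 2 * sa ^ 2) := mul_pos hX0 (by linarith)
  have hT' : 1 - 2 * sa ^ 2 < sa * cg - ca * sg :=
    lt_of_pow_lt_pow_left₀ 2 hT.le (by linarith)
  have hS' : 2 * sa ^ 2 < 2 * sa * ca :=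
    lt_of_pow_lt_pow_left₀ 2 hS0.le (by linarith)
  have hsg2 : 1 < 2 * sg := by linarith
  exact ⟨by nlinarith, by linarith⟩

/-- Closing up the polygon whose unit edges `(xᵢ, yᵢ)` have successive exterior angles
`g`, `π - 2g`, `a` after the first three edges, and `π - 2a` between the last edge and the first:
the edge sum, read in the frame of the first edge, gives the two closing equations. -/
lemma closing_equations {x₁ y₁ x₂ y₂ x₃ y₃ x₄ y₄ x₅ y₅ sg cg sa ca : ℝ}
    (n₁ : x₁ ^ 2 + y₁ ^ 2 = 1) (n₂ : x₂ ^ 2 + y₂ ^ 2 = 1) (n₃ : x₃ ^ 2 + y₃ ^ 2 = 1)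
    (hx : x₁ + x₂ + x₃ + x₄ + x₅ = 0) (hy : y₁ + y₂ + y₃ + y₄ + y₅ = 0)
    (hg : sg ^ 2 + cg ^ 2 = 1) (ha : sa ^ 2 + ca ^ 2 = 1)
    (i₁₂ : x₁ * x₂ + y₁ * y₂ = cg) (d₁₂ : x₁ * y₂ - y₁ * x₂ = sg)
    (i₂₃ : x₂ * x₃ + y₂ * y₃ = sg ^ 2 - cg ^ 2) (d₂₃ : x₂ * y₃ - y₂ * x₃ = 2 * sg * cg)
    (i₃₄ : x₃ * x₄ + y₃ * y₄ = ca) (d₃₄ : x₃ * y₄ - y₃ * x₄ = sa)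
    (i₅₁ : x₅ * x₁ + y₅ * y₁ = sa ^ 2 - ca ^ 2) (d₅₁ : x₅ * y₁ - y₅ * x₁ = 2 * sa * ca) :
    ca * cg + sa * sg = 2 * sa ^ 2 ∧ 2 * sg = sa * cg - ca * sg + 2 * sa * ca := by
  -- Dot products and determinants against the first edge multiply like complex numbers.
  have i₁₃ : x₁ * x₃ + y₁ * y₃ = -cg := by
    have : x₁ * x₃ + y₁ * y₃ = (x₁ * x₂ + y₁ * y₂) * (x₂ * x₃ + y₂ * y₃)
        - (x₁ * y₂ - y₁ * x₂) * (x₂ * y₃ - y₂ * x₃) := by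
      linear_combination -(x₁ * x₃ + y₁ * y₃) * n₂
    rw [this, i₁₂, i₂₃, d₁₂, d₂₃]
    linear_combination -cg * hg
  have d₁₃ : x₁ * y₃ - y₁ * x₃ = sg := by
    have : x₁ * y₃ - y₁ * x₃ = (x₁ * y₂ - y₁ * x₂) * (x₂ * x₃ + y₂ * y₃)
        + (x₁ * x₂ + y₁ * y₂) * (x₂ * y₃ - y₂ * x₃) := by
      linear_combination -(x₁ * y₃ - y₁ * x₃) * n₂
    rw [this, i₁₂, i₂₃, d₁₂, d₂₃]
    linear_combination sg * hg
  have i₁₄ : x₁ * x₄ + y₁ * y₄ = -cg * ca - sg * sa := by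
    rw [← i₁₃, ← d₁₃, ← i₃₄, ← d₃₄]
    linear_combination -(x₁ * x₄ + y₁ * y₄) * n₃
  have d₁₄ : x₁ * y₄ - y₁ * x₄ = sg * ca - cg * sa := by
    have : x₁ * y₄ - y₁ * x₄ = (x₁ * y₃ - y₁ * x₃) * (x₃ * x₄ + y₃ * y₄)
        + (x₁ * x₃ + y₁ * y₃) * (x₃ * y₄ - y₃ * x₄) := by
      linear_combination -(x₁ * y₄ - y₁ * x₄) * n₃
    rw [this, i₁₃, d₁₃, i₃₄, d₃₄]
    ring
  constructor
  · linear_combination n₁ + i₁₂ + i₁₃ + i₁₄ + i₅₁ - x₁ * hx - y₁ * hy - ha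
  · linear_combination - d₁₂ - d₁₃ - d₁₄ + d₅₁ + x₁ * hy - y₁ * hx

/-- Dot product and determinant of the two unit edges meeting at `Q` in terms of the interior angle
there; `τ = ±1` is the orientation of the polygon. -/
lemma corner {P Q R : EuclideanSpace ℝ (Fin 2)} {τ : ℝ} (hτ : τ ^ 2 = 1)
    (hPQ : dist P Q = 1) (hQR : dist Q R = 1)
    (hdet : 0 < τ * det2 (Q - P) (R - Q)) :
    (Q 0 - P 0) * (R 0 - Q 0) + τ * (Q 1 - P 1) * (τ * (R 1 - Q 1)) = -Real.cos (∠ P Q R) ∧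
    (Q 0 - P 0) * (τ * (R 1 - Q 1)) - τ * (Q 1 - P 1) * (R 0 - Q 0) = Real.sin (∠ P Q R) ∧
    0 < Real.sin (∠ P Q R) := by
  have hc := InnerProductGeometry.cos_angle_mul_norm_mul_norm (P - Q) (R - Q)
  rw [← dist_eq_norm, ← dist_eq_norm, hPQ, dist_comm R Q, hQR] at hc
  change Real.cos (∠ P Q R) * _ = _ at hc
  simp only [PiLp.inner_apply, Fin.sum_univ_two, PiLp.sub_apply, RCLike.inner_apply,
    conj_trivial] at hc
  simp only [EuclideanSpace.dist_eq, Fin.sum_univ_two, Real.sqrt_eq_one, Real.dist_eq,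
    sq_abs] at hPQ hQR
  simp only [det2, PiLp.sub_apply] at hdet
  have hs0 : 0 ≤ Real.sin (∠ P Q R) := InnerProductGeometry.sin_angle_nonneg _ _
  have hsc := Real.sin_sq_add_cos_sq (∠ P Q R)
  have hcos : (Q 0 - P 0) * (R 0 - Q 0) + (Q 1 - P 1) * (R 1 - Q 1) = -Real.cos (∠ P Q R) := by
    linear_combination hc
  have hsin : τ * ((Q 0 - P 0) * (R 1 - Q 1) - (Q 1 - P 1) * (R 0 - Q 0))
      = Real.sin (∠ P Q R) := by
    rw [← sq_eq_sq₀ hdet.le hs0, mul_pow, hτ]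
    have : Real.sin (∠ P Q R) ^ 2 = 1 - (-Real.cos (∠ P Q R)) ^ 2 := by linear_combination hsc
    rw [this, ← hcos]
    linear_combination ((Q 0 - R 0) ^ 2 + (Q 1 - R 1) ^ 2) * hPQ + hQR
  refine ⟨?_, ?_, ?_⟩
  · linear_combination hcos + (Q 1 - P 1) * (R 1 - Q 1) * hτ
  · linear_combination hsin
  · rw [← hsin]; exact hdet

theorem type7_diagonal_bounds
    (A B C D E : EuclideanSpace ℝ (Fin 2)) (α β γ δ ε : ℝ)
    (hconv : ConvexPos5 A B C D E) (hequi : Equilateral5 A B C D E)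
    (hα : α = ∠ E A B) (hβ : β = ∠ A B C) (hγ : γ = ∠ B C D)
    (hδ : δ = ∠ C D E) (hε : ε = ∠ D E A)
    (hunit : dist A B = 1)
    (h1 : 2 * β + γ = 2 * Real.pi) (h2 : 2 * δ + α = 2 * Real.pi) :
    1 < dist B D ∧ dist B D < Real.sqrt 3 := by
  have horient : ∃ τ : ℝ, τ ^ 2 = 1 ∧ 0 < τ * det2 (B - A) (C - B) ∧
      0 < τ * det2 (C - B) (D - C) ∧ 0 < τ * det2 (D - C) (E - D) ∧
      0 < τ * det2 (A - E) (B - A) := by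
    rcases hconv with h | h
    · obtain ⟨hABC, -, -, hBCD, -, -, hCDE, -, -, -, -, -, hEAB, -, -⟩ := h
      refine ⟨1, by norm_num, ?_⟩
      simp only [SLeft, det2, PiLp.sub_apply] at *
      refine ⟨?_, ?_, ?_, ?_⟩ <;> linarith
    · obtain ⟨hEDC, -, -, hDCB, -, -, hCBA, -, -, hBAE, -, -, -, -, -⟩ := h
      refine ⟨-1, by norm_num, ?_⟩
      simp only [SLeft, det2, PiLp.sub_apply] at *
      refine ⟨?_, ?_, ?_, ?_⟩ <;> linarith
  obtain ⟨τ, hτ, dB, dC, dD, dA⟩ := horient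
  obtain ⟨e₁, e₂, e₃, e₄⟩ := hequi
  have hBC : dist B C = 1 := by linarith
  have hCD : dist C D = 1 := by linarith
  have hDE : dist D E = 1 := by linarith
  have hEA : dist E A = 1 := by linarith
  obtain ⟨iB, sB, pB⟩ := corner hτ hunit hBC dB
  obtain ⟨iC, sC, pC⟩ := corner hτ hBC hCD dC
  obtain ⟨iD, sD, pD⟩ := corner hτ hCD hDE dD
  obtain ⟨iA, sA, pA⟩ := corner hτ hEA hunit dA
  rw [← hβ] at iB sB pB
  rw [← hγ] at iC sC pC
  rw [← hδ] at iD sD pD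
  rw [← hα] at iA sA pA
  have hγ' : γ = 2 * Real.pi - 2 * β := by linarith
  have hα' : α = 2 * Real.pi - 2 * δ := by linarith
  rw [hγ', Real.cos_two_pi_sub, Real.cos_two_mul'] at iC
  rw [hγ', Real.sin_two_pi_sub, Real.sin_two_mul] at sC pC
  rw [hα', Real.cos_two_pi_sub, Real.cos_two_mul'] at iA
  rw [hα', Real.sin_two_pi_sub, Real.sin_two_mul] at sA pA
  have nB := Real.sin_sq_add_cos_sq β
  have nD := Real.sin_sq_add_cos_sq δ
  have hcB : 0 < -Real.cos β := by
    by_contra! h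
    linarith [mul_nonneg pB.le (show 0 ≤ Real.cos β by linarith)]
  have hcD : 0 < -Real.cos δ := by
    by_contra! h
    linarith [mul_nonneg pD.le (show 0 ≤ Real.cos δ by linarith)]
  have hBD : dist B D ^ 2 = 4 * Real.sin β ^ 2 := by
    simp only [EuclideanSpace.dist_eq, Fin.sum_univ_two, Real.sqrt_eq_one, Real.dist_eq,
      sq_abs] at hBC hCD ⊢
    rw [Real.sq_sqrt (by positivity)]
    linear_combination hBC + hCD + 2 * iC - 2 * nB - 2 * (C 1 - B 1) * (D 1 - C 1) * hτ
  simp only [EuclideanSpace.dist_eq, Fin.sum_univ_two, Real.sqrt_eq_one, Real.dist_eq,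
    sq_abs] at hunit hBC hCD
  -- The factor `τ` on the second coordinates reflects a clockwise pentagon to a
  -- counterclockwise one.
  obtain ⟨hre, him⟩ := closing_equations
    (x₁ := B 0 - A 0) (y₁ := τ * (B 1 - A 1)) (x₂ := C 0 - B 0) (y₂ := τ * (C 1 - B 1))
    (x₃ := D 0 - C 0) (y₃ := τ * (D 1 - C 1)) (x₄ := E 0 - D 0) (y₄ := τ * (E 1 - D 1))
    (x₅ := A 0 - E 0) (y₅ := τ * (A 1 - E 1))
    (sg := Real.sin β) (cg := -Real.cos β) (sa := Real.sin δ) (ca := -Real.cos δ)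
    (by linear_combination hunit + (B 1 - A 1) ^ 2 * hτ)
    (by linear_combination hBC + (C 1 - B 1) ^ 2 * hτ)
    (by linear_combination hCD + (D 1 - C 1) ^ 2 * hτ)
    (by ring) (by ring) (by linear_combination nB) (by linear_combination nD)
    iB sB (by linear_combination iC) (by linear_combination sC)
    iD sD (by linear_combination iA) (by linear_combination sA)
  obtain ⟨hlow, hupp⟩ := sine_bounds pB hcB pD hcD (by linear_combination nB)
    (by linear_combination nD) hre him
  rw [← hBD] at hlow hupp
  have h0 : 0 ≤ dist B D := dist_nonneg
  exact ⟨lt_of_pow_lt_pow_left₀ 2 h0 (by linarith), Real.lt_sqrt_of_sq_lt hupp⟩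
end

section
/- Let ABCDEF be a strictly convex equilateral hexagon in the Euclidean plane whose interior angles at the alternating vertices B, D, F all equal 2π/3. Then the hexagon is regular: all six interior angles equal 2π/3. -/
/-!
Let `s` be the side length. In counterclockwise orientation, an interior angle `2π/3` at `B`, `D`,
`F` says that the second edge vector at that vertex is the first one rotated by `π/3`. Writing `R`
for this rotation and `u, w, z` for the edges `AB`, `CD`, `EF`, closure of the hexagon reads
`(1 + R)(u + w + z) = 0`, so `u + w + z = 0`. As the three vectors have equal length, `w` is `u`
rotated by `± 2π/3`. The minus sign would make `CD` antiparallel to `BC = R u`, which strict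
convexity at `C` excludes; hence `BC` and `CD` meet at interior angle `2π/3`
(`edge_vectors_inner`, `angle_of_ccw`). Cyclic relabelling gives the other vertices, and
reversing the labels gives the clockwise case.
-/

open EuclideanGeometry

/-- The six points are in strictly convex position, listed in counterclockwise
cyclic order along their convex hull (in particular no three are collinear):
for every directed edge of the hexagon, all remaining vertices lie strictly to its left. -/
def CcwConvex6 (A B C D E F : EuclideanSpace ℝ (Fin 2)) : Prop :=
  SLeft A B C ∧ SLeft A B D ∧ SLeft A B E ∧ SLeft A B F ∧
  SLeft B C A ∧ SLeft B C D ∧ SLeft B C E ∧ SLeft B C F ∧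
  SLeft C D A ∧ SLeft C D B ∧ SLeft C D E ∧ SLeft C D F ∧
  SLeft D E A ∧ SLeft D E B ∧ SLeft D E C ∧ SLeft D E F ∧
  SLeft E F A ∧ SLeft E F B ∧ SLeft E F C ∧ SLeft E F D ∧
  SLeft F A B ∧ SLeft F A C ∧ SLeft F A D ∧ SLeft F A E

/-- The six points are in strictly convex position, listed in cyclic order
(either orientation) along their convex hull, with no three collinear. -/
def ConvexPos6 (A B C D E F : EuclideanSpace ℝ (Fin 2)) : Prop :=
  CcwConvex6 A B C D E F ∨ CcwConvex6 F E D C B A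

/-- The hexagon `ABCDEF` is equilateral. -/
def Equilateral6 (A B C D E F : EuclideanSpace ℝ (Fin 2)) : Prop :=
  dist A B = dist B C ∧ dist B C = dist C D ∧ dist C D = dist D E ∧
    dist D E = dist E F ∧ dist E F = dist F A

/-- For two sides of common squared length `S ≠ 0`, the angle `2π/3` amounts to the inner product
of the consecutive edge vectors `Q - P`, `R - Q` being `S / 2`. -/
lemma angle_eq_iff {P Q R : EuclideanSpace ℝ (Fin 2)} {S : ℝ} (hS : 0 < S)
    (h1 : (Q 0 - P 0) ^ 2 + (Q 1 - P 1) ^ 2 = S) (h2 : (R 0 - Q 0) ^ 2 + (R 1 - Q 1) ^ 2 = S) :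
    ∠ P Q R = 2 * Real.pi / 3 ↔
      (Q 0 - P 0) * (R 0 - Q 0) + (Q 1 - P 1) * (R 1 - Q 1) = S / 2 := by
  have n1 : ‖P - Q‖ = √S := by
    rw [EuclideanSpace.norm_eq, Fin.sum_univ_two, ← h1]
    simp only [PiLp.sub_apply, Real.norm_eq_abs, sq_abs]
    congr 1; ring
  have n2 : ‖R - Q‖ = √S := by
    rw [EuclideanSpace.norm_eq, Fin.sum_univ_two, ← h2]
    simp only [PiLp.sub_apply, Real.norm_eq_abs, sq_abs]
  have hcos : Real.cos (2 * Real.pi / 3) = -1 / 2 := by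
    rw [show 2 * Real.pi / 3 = Real.pi - Real.pi / 3 by ring, Real.cos_pi_sub,
      Real.cos_pi_div_three]
    norm_num
  have key : Real.cos (∠ P Q R) * S =
      -((Q 0 - P 0) * (R 0 - Q 0) + (Q 1 - P 1) * (R 1 - Q 1)) := by
    have h := InnerProductGeometry.cos_angle_mul_norm_mul_norm (P - Q) (R - Q)
    rw [n1, n2, Real.mul_self_sqrt hS.le] at h
    simp only [EuclideanGeometry.angle, vsub_eq_sub]
    rw [h]
    simp only [PiLp.inner_apply, Fin.sum_univ_two, PiLp.sub_apply, RCLike.inner_apply,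
      conj_trivial]
    ring
  constructor
  · intro h
    rw [h, hcos] at key
    linarith
  · intro h
    rw [h] at key
    refine Real.injOn_cos ⟨EuclideanGeometry.angle_nonneg _ _ _, EuclideanGeometry.angle_le_pi _ _ _⟩
      ⟨by positivity, by linarith [Real.pi_pos]⟩ ?_
    rw [hcos]
    apply mul_right_cancel₀ hS.ne'
    linarith

/-- A vector `(c, d)` as long as `(a, b)`, at angle `π/3` from it and to its left, is `(a, b)`
rotated by `π/3`. -/
lemma eq_rotation {a b c d S : ℝ} (hS : 0 < S) (h1 : a ^ 2 + b ^ 2 = S) (h2 : c ^ 2 + d ^ 2 = S)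
    (hi : a * c + b * d = S / 2) (hd : 0 < a * d - b * c) :
    c = a / 2 - √3 / 2 * b ∧ d = √3 / 2 * a + b / 2 := by
  have hr : √3 ^ 2 = (3 : ℝ) := Real.sq_sqrt (by norm_num)
  have hdet : a * d - b * c = √3 / 2 * S := by
    have : (a * d - b * c) ^ 2 = (√3 / 2 * S) ^ 2 := by
      have : (a * d - b * c) ^ 2 + (a * c + b * d) ^ 2 = (a ^ 2 + b ^ 2) * (c ^ 2 + d ^ 2) := by
        ring
      rw [h1, h2, hi] at this
      linear_combination this - S ^ 2 / 4 * hr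
    exact (pow_left_inj₀ hd.le (by positivity) two_ne_zero).1 this
  constructor <;> apply mul_left_cancel₀ hS.ne'
  · linear_combination a * hi - b * hdet - c * h1
  · linear_combination b * hi + a * hdet - d * h1

/-- The planar computation at `C`: `u, v, w, x, z, y` are the edge vectors in cyclic order. -/
lemma edge_vectors_inner {u₀ u₁ v₀ v₁ w₀ w₁ x₀ x₁ z₀ z₁ y₀ y₁ S : ℝ} (hS : 0 < S)
    (hu : u₀ ^ 2 + u₁ ^ 2 = S) (hv : v₀ ^ 2 + v₁ ^ 2 = S) (hw : w₀ ^ 2 + w₁ ^ 2 = S)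
    (hx : x₀ ^ 2 + x₁ ^ 2 = S) (hz : z₀ ^ 2 + z₁ ^ 2 = S) (hy : y₀ ^ 2 + y₁ ^ 2 = S)
    (huv : u₀ * v₀ + u₁ * v₁ = S / 2) (hwx : w₀ * x₀ + w₁ * x₁ = S / 2)
    (hzy : z₀ * y₀ + z₁ * y₁ = S / 2)
    (duv : 0 < u₀ * v₁ - u₁ * v₀) (dwx : 0 < w₀ * x₁ - w₁ * x₀) (dzy : 0 < z₀ * y₁ - z₁ * y₀)
    (dvw : 0 < v₀ * w₁ - v₁ * w₀)
    (s₀ : u₀ + v₀ + w₀ + x₀ + z₀ + y₀ = 0) (s₁ : u₁ + v₁ + w₁ + x₁ + z₁ + y₁ = 0) :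
    v₀ * w₀ + v₁ * w₁ = S / 2 := by
  have hr : √3 ^ 2 = (3 : ℝ) := Real.sq_sqrt (by norm_num)
  obtain ⟨rv₀, rv₁⟩ := eq_rotation hS hu hv huv duv
  obtain ⟨rx₀, rx₁⟩ := eq_rotation hS hw hx hwx dwx
  obtain ⟨ry₀, ry₁⟩ := eq_rotation hS hz hy hzy dzy
  -- `1 + R` is invertible, with determinant `3`.
  have t₀ : z₀ = -u₀ - w₀ := by
    rw [rv₀, rx₀, ry₀] at s₀
    rw [rv₁, rx₁, ry₁] at s₁
    linear_combination (1 / 2) * s₀ + √3 / 6 * s₁ - (u₀ + w₀ + z₀) / 12 * hr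
  have t₁ : z₁ = -u₁ - w₁ := by
    rw [rv₀, rx₀, ry₀] at s₀
    rw [rv₁, rx₁, ry₁] at s₁
    linear_combination (1 / 2) * s₁ - √3 / 6 * s₀ - (u₁ + w₁ + z₁) / 12 * hr
  have iuw : u₀ * w₀ + u₁ * w₁ = -S / 2 := by
    rw [t₀, t₁] at hz
    linear_combination hz / 2 - hu / 2 - hw / 2
  -- `det (u, w) = ± √3 / 2 * S`, and the minus sign gives `det (v, w) = 0`.
  have hdet : u₀ * w₁ - u₁ * w₀ = √3 / 2 * S := by
    have hsq : (u₀ * w₁ - u₁ * w₀ - √3 / 2 * S) * (u₀ * w₁ - u₁ * w₀ + √3 / 2 * S) = 0 := by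
      have : (u₀ * w₁ - u₁ * w₀) ^ 2 + (u₀ * w₀ + u₁ * w₁) ^ 2
          = (u₀ ^ 2 + u₁ ^ 2) * (w₀ ^ 2 + w₁ ^ 2) := by ring
      rw [hu, hw, iuw] at this
      linear_combination this - S ^ 2 / 4 * hr
    rcases mul_eq_zero.1 hsq with h | h
    · linarith
    · exfalso
      have : v₀ * w₁ - v₁ * w₀ = 0 := by
        rw [rv₀, rv₁]
        linear_combination h / 2 - √3 / 2 * iuw
      linarith
  rw [rv₀, rv₁]
  linear_combination iuw / 2 + √3 / 2 * hdet + S / 4 * hr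

/-- The angle at `C` of a counterclockwise hexagon; only convexity at `B`, `C`, `D`, `F` matters. -/
lemma angle_of_ccw {A B C D E F : EuclideanSpace ℝ (Fin 2)}
    (cB : SLeft A B C) (cD : SLeft C D E) (cF : SLeft E F A) (cC : SLeft B C D)
    (hequi : Equilateral6 A B C D E F)
    (hB : ∠ A B C = 2 * Real.pi / 3) (hD : ∠ C D E = 2 * Real.pi / 3)
    (hF : ∠ E F A = 2 * Real.pi / 3) : ∠ B C D = 2 * Real.pi / 3 := by
  have hd : ∀ P Q : EuclideanSpace ℝ (Fin 2),
      (Q 0 - P 0) ^ 2 + (Q 1 - P 1) ^ 2 = dist P Q ^ 2 := by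
    intro P Q
    rw [EuclideanSpace.dist_eq, Fin.sum_univ_two, Real.sq_sqrt (by positivity),
      Real.dist_eq, Real.dist_eq, sq_abs, sq_abs]
    ring
  obtain ⟨e1, e2, e3, e4, e5⟩ := hequi
  have hAB := hd A B
  have hBC := hd B C
  have hCD := hd C D
  have hDE := hd D E
  have hEF := hd E F
  have hFA := hd F A
  rw [← e5, ← e4, ← e3, ← e2, ← e1] at hFA
  rw [← e4, ← e3, ← e2, ← e1] at hEF
  rw [← e3, ← e2, ← e1] at hDE
  rw [← e2, ← e1] at hCD
  rw [← e1] at hBC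
  simp only [SLeft, det2, PiLp.sub_apply] at cB cD cF cC
  have hS : 0 < dist A B ^ 2 := by
    have : A ≠ B := by
      rintro rfl
      simp at cB
    have := dist_pos.2 this
    positivity
  generalize dist A B ^ 2 = S at *
  rw [angle_eq_iff hS hAB hBC] at hB
  rw [angle_eq_iff hS hCD hDE] at hD
  rw [angle_eq_iff hS hEF hFA] at hF
  rw [angle_eq_iff hS hBC hCD]
  exact edge_vectors_inner hS hAB hBC hCD hDE hEF hFA hB hD hF (by linarith) (by linarith)
    (by linarith) (by linarith) (by ring) (by ring)

theorem hexagon_alternating_angles_regular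
    (A B C D E F : EuclideanSpace ℝ (Fin 2))
    (hconv : ConvexPos6 A B C D E F) (hequi : Equilateral6 A B C D E F)
    (hB : ∠ A B C = 2 * Real.pi / 3) (hD : ∠ C D E = 2 * Real.pi / 3)
    (hF : ∠ E F A = 2 * Real.pi / 3) :
    ∠ F A B = 2 * Real.pi / 3 ∧ ∠ A B C = 2 * Real.pi / 3 ∧
    ∠ B C D = 2 * Real.pi / 3 ∧ ∠ C D E = 2 * Real.pi / 3 ∧
    ∠ D E F = 2 * Real.pi / 3 ∧ ∠ E F A = 2 * Real.pi / 3 := by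
  suffices h : ∠ F A B = 2 * Real.pi / 3 ∧ ∠ B C D = 2 * Real.pi / 3 ∧
      ∠ D E F = 2 * Real.pi / 3 from ⟨h.1, hB, h.2.1, hD, h.2.2, hF⟩
  obtain ⟨e1, e2, e3, e4, e5⟩ := hequi
  rcases hconv with h | h
  · obtain ⟨cB, -, -, -, -, cC, -, -, -, -, cD, -, -, -, -, cE, cF, -, -, -, cA, -, -, -⟩ := h
    refine ⟨angle_of_ccw (A := E) (E := C) (D := B) cF cB cD cA ?_ hF hB hD,
      angle_of_ccw cB cD cF cC ?_ hB hD hF,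
      angle_of_ccw (A := C) (E := A) (B := D) cD cF cB cE ?_ hD hF hB⟩ <;>
    · refine ⟨?_, ?_, ?_, ?_, ?_⟩ <;> linarith
  · obtain ⟨cE, -, -, -, -, cD, -, -, -, -, cC, -, -, -, -, cB, cA, -, -, -, cF, -, -, -⟩ := h
    rw [EuclideanGeometry.angle_comm] at hB hD hF
    rw [EuclideanGeometry.angle_comm F A B, EuclideanGeometry.angle_comm B C D,
      EuclideanGeometry.angle_comm D E F]
    refine ⟨angle_of_ccw (A := C) (E := E) (D := F) cB cF cD cA ?_ hB hF hD,
      angle_of_ccw (A := E) (E := A) (F := F) cD cB cF cC ?_ hD hB hF,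
      angle_of_ccw (A := A) (E := C) (F := B) cF cD cB cE ?_ hF hD hB⟩ <;>
    · simp only [Equilateral6, dist_comm] at *
      refine ⟨?_, ?_, ?_, ?_, ?_⟩ <;>
        linarith [dist_comm A B, dist_comm B C, dist_comm C D, dist_comm D E, dist_comm E F,
          dist_comm F A]
end

section
/- Let ABCDE be a strictly convex equilateral pentagon whose interior angles satisfy 2β + γ = 2π and 2δ + α = 2π (type 7 conditions). Then the diagonal BD is perpendicular to the side AB, and the diagonal BD is not perpendicular to the side DE unless δ + γ/2 = π. -/
/-!
Since `BC = CD`, the triangle `BCD` is isosceles with base angles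
`∠ CBD = ∠ CDB = (π - γ) / 2`. By convexity the diagonal `BD` lies inside the angles at `B` and
at `D`, so `β = ∠ CBD + ∠ DBA` and `δ = ∠ CDB + ∠ BDE` (`angle_split`). The condition
`2β + γ = 2π` turns the first identity into `∠ DBA = π / 2`, and the second one shows that
`∠ BDE = π / 2` means `δ + γ / 2 = π`.
-/

open EuclideanGeometry

/-- The determinant conditions say that the ray `PY` lies inside the convex angle `XPZ`:
divided by `det2 (X - P) (Z - P)`, the other two determinants are the coefficients of `Y - P` in the
basis `X - P`, `Z - P`. -/
lemma angle_split {P X Y Z : EuclideanSpace ℝ (Fin 2)}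
    (hXY : SLeft P X Y) (hYZ : SLeft P Y Z) (hXZ : SLeft P X Z) :
    ∠ X P Z = ∠ X P Y + ∠ Y P Z := by
  unfold SLeft at hXY hYZ hXZ
  have hy : Y - P ≠ 0 := by
    intro h
    simp [h, det2] at hXY
  refine InnerProductGeometry.angle_eq_angle_add_add_angle_add_of_mem_span hy ?_
  rw [Submodule.mem_span_pair]
  refine ⟨⟨det2 (Y - P) (Z - P) / det2 (X - P) (Z - P), by positivity⟩,
    ⟨det2 (X - P) (Y - P) / det2 (X - P) (Z - P), by positivity⟩, ?_⟩
  -- Cramer's rule in the basis `X - P`, `Z - P`.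
  have hne := hXZ.ne'
  ext i
  change det2 (Y - P) (Z - P) / det2 (X - P) (Z - P) * (X - P) i +
    det2 (X - P) (Y - P) / det2 (X - P) (Z - P) * (Z - P) i = (Y - P) i
  field_simp
  fin_cases i <;> simp [det2] <;> ring

lemma SLeft.rotate {P Q R : EuclideanSpace ℝ (Fin 2)} (h : SLeft P Q R) : SLeft Q R P := by
  unfold SLeft det2 at *
  simp only [PiLp.sub_apply] at *
  linarith

theorem type7_perpendicular_diagonal
    (A B C D E : EuclideanSpace ℝ (Fin 2)) (α β γ δ ε : ℝ)
    (hconv : ConvexPos5 A B C D E) (hequi : Equilateral5 A B C D E)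
    (hα : α = ∠ E A B) (hβ : β = ∠ A B C) (hγ : γ = ∠ B C D)
    (hδ : δ = ∠ C D E) (hε : ε = ∠ D E A)
    (h1 : 2 * β + γ = 2 * Real.pi) (h2 : 2 * δ + α = 2 * Real.pi) :
    ∠ D B A = Real.pi / 2 ∧
      (∠ B D E = Real.pi / 2 → δ + γ / 2 = Real.pi) := by
  have hsplit : ∠ A B C = ∠ A B D + ∠ D B C ∧ ∠ C D E = ∠ C D B + ∠ B D E := by
    rcases hconv with h | h
    · obtain ⟨hABC, hABD, -, hBCD, -, -, -, -, hCDB, -, hDEB, hDEC, -⟩ := h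
      have hB := angle_split hBCD hABD.rotate hABC.rotate
      have hD := angle_split hDEB hCDB.rotate hDEC
      rw [angle_comm C B A, angle_comm C B D, angle_comm D B A] at hB
      rw [angle_comm E D C, angle_comm E D B, angle_comm B D C] at hD
      constructor <;> linarith
    · obtain ⟨hEDC, hEDB, -, hDCB, -, -, -, -, hCBD, -, hBAD, hBAC, -⟩ := h
      exact ⟨angle_split hBAD hCBD.rotate hBAC,
        angle_split hDCB hEDB.rotate hEDC.rotate⟩
  have hBC : B ≠ C := by
    rintro rfl
    rcases hconv with h | h
    · simpa [SLeft, det2] using h.2.2.2.1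
    · simpa [SLeft, det2] using h.2.2.2.2.2.2.2.2.1
  have hiso : ∠ C B D = ∠ C D B :=
    angle_eq_angle_of_dist_eq (by rw [dist_comm C B]; exact hequi.2.1)
  have hsum := angle_add_angle_add_angle_eq_pi D hBC.symm
  obtain ⟨hsplitB, hsplitD⟩ := hsplit
  rw [angle_comm C B D] at hiso
  rw [angle_comm D B A]
  refine ⟨by linarith, fun h => by linarith⟩
end

section
/- Let ABCDE be a strictly convex equilateral pentagon with unit side length whose interior angles satisfy 2α + β = 2π and 2δ + γ = 2π (type 8 conditions). Then the diagonal BD is perpendicular to the side DE, and dist(B,D) = 2·sin(γ/2). -/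
/-!
The triangle `BCD` with unit legs `BC`, `CD` is
isosceles with apex angle `γ`, so `BD = 2 sin (γ/2)` and `∠CDB = π/2 - γ/2`; since `2δ + γ = 2π` and the diagonal
`DB` runs inside the angle `δ = π - γ/2`, the remaining part `∠BDE` is `π/2`.

The subtraction of angles is carried out with vectors. Put `u = D - C`, `v = B - C`, `w = E - D`,
`c = cos (γ/2)`, `s = sin (γ/2)`. Then `u·v = 2c² - 1` and `u·w = c`, while convexity says that
`det(u,v)` and `det(u,w)` have the same sign, which forces `det(u,v) det(u,w) = 2cs²`. Hence
`v·w = (u·v)(u·w) + det(u,v) det(u,w) = c = u·w`, that is, `(v - u)·w = 0`.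
-/

open EuclideanGeometry

lemma cos_angle_of_unit (P Q R : EuclideanSpace ℝ (Fin 2))
    (hPQ : dist P Q = 1) (hRQ : dist R Q = 1) :
    Real.cos (∠ P Q R) = (P 0 - Q 0) * (R 0 - Q 0) + (P 1 - Q 1) * (R 1 - Q 1) := by
  rw [EuclideanGeometry.angle, InnerProductGeometry.cos_angle]
  rw [dist_eq_norm] at hPQ hRQ
  simp only [vsub_eq_sub, hPQ, hRQ, PiLp.inner_apply, Fin.sum_univ_two, PiLp.sub_apply,
    RCLike.inner_apply, conj_trivial]
  ring

lemma dist_sq_coord (P Q : EuclideanSpace ℝ (Fin 2)) :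
    dist P Q ^ 2 = (P 0 - Q 0) ^ 2 + (P 1 - Q 1) ^ 2 := by
  rw [EuclideanSpace.dist_eq, Real.sq_sqrt (by positivity)]
  simp [Fin.sum_univ_two, Real.dist_eq, sq_abs]

/-- Convexity enters through this fact: the turns at `C` and `D` have the same orientation. -/
lemma turns_same_sign {A B C D E : EuclideanSpace ℝ (Fin 2)} (h : ConvexPos5 A B C D E) :
    0 < det2 (D - C) (B - C) * det2 (D - C) (E - D) := by
  rcases h with h | h
  · obtain ⟨-, -, -, h1, -, -, h2, -⟩ := h
    simp only [SLeft, det2, PiLp.sub_apply] at h1 h2 ⊢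
    apply mul_pos <;> linarith
  · obtain ⟨h2, -, -, h1, -⟩ := h
    simp only [SLeft, det2, PiLp.sub_apply] at h1 h2 ⊢
    apply mul_pos_of_neg_of_neg <;> linarith

/-- The vector computation behind the perpendicularity: `u`, `v`, `w` are unit vectors,
`u·v = 2c² - 1`, `u·w = c`, and `v`, `w` lie on the same side of `u`. -/
lemma dot_eq_of_half_angle {u₀ u₁ v₀ v₁ w₀ w₁ c : ℝ}
    (hu : u₀ ^ 2 + u₁ ^ 2 = 1) (hv : v₀ ^ 2 + v₁ ^ 2 = 1) (hw : w₀ ^ 2 + w₁ ^ 2 = 1)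
    (huv : u₀ * v₀ + u₁ * v₁ = 2 * c ^ 2 - 1) (huw : u₀ * w₀ + u₁ * w₁ = c)
    (hc : 0 ≤ c) (hpos : 0 < (u₀ * v₁ - u₁ * v₀) * (u₀ * w₁ - u₁ * w₀)) :
    v₀ * w₀ + v₁ * w₁ = c := by
  have e1 : (u₀ * v₁ - u₁ * v₀) ^ 2 = 1 - (2 * c ^ 2 - 1) ^ 2 := by
    rw [← huv]
    linear_combination (v₀ ^ 2 + v₁ ^ 2) * hu + hv
  have e2 : (u₀ * w₁ - u₁ * w₀) ^ 2 = 1 - c ^ 2 := by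
    rw [← huw]
    linear_combination (w₀ ^ 2 + w₁ ^ 2) * hu + hw
  have hs : 0 ≤ 1 - c ^ 2 := e2 ▸ sq_nonneg _
  have e3 : (u₀ * v₁ - u₁ * v₀) * (u₀ * w₁ - u₁ * w₀) = 2 * c * (1 - c ^ 2) := by
    rw [← sq_eq_sq₀ hpos.le (by positivity), mul_pow, e1, e2]
    ring
  have e4 : v₀ * w₀ + v₁ * w₁ = (u₀ * v₀ + u₁ * v₁) * (u₀ * w₀ + u₁ * w₁)
      + (u₀ * v₁ - u₁ * v₀) * (u₀ * w₁ - u₁ * w₀) := by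
    linear_combination -(v₀ * w₀ + v₁ * w₁) * hu
  rw [e4, e3, huv, huw]
  ring

theorem type8_perpendicular_diagonal
    (A B C D E : EuclideanSpace ℝ (Fin 2)) (α β γ δ ε : ℝ)
    (hconv : ConvexPos5 A B C D E) (hequi : Equilateral5 A B C D E)
    (hα : α = ∠ E A B) (hβ : β = ∠ A B C) (hγ : γ = ∠ B C D)
    (hδ : δ = ∠ C D E) (hε : ε = ∠ D E A)
    (hunit : dist A B = 1)
    (h1 : 2 * α + β = 2 * Real.pi) (h2 : 2 * δ + γ = 2 * Real.pi) :
    ∠ B D E = Real.pi / 2 ∧ dist B D = 2 * Real.sin (γ / 2) := by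
  obtain ⟨hAB, hBC, hCD, -⟩ := hequi
  have dBC : dist B C = 1 := hAB ▸ hunit
  have dCD : dist C D = 1 := hBC ▸ dBC
  have dDE : dist D E = 1 := hCD ▸ dCD
  have cγ := cos_angle_of_unit B C D dBC (by rw [dist_comm, dCD])
  have cδ := cos_angle_of_unit C D E dCD (by rw [dist_comm, dDE])
  rw [← hγ, show γ = 2 * (γ / 2) by ring, Real.cos_two_mul] at cγ
  rw [← hδ, show δ = Real.pi - γ / 2 by linarith, Real.cos_pi_sub] at cδ
  have hγ0 : 0 ≤ γ := hγ ▸ EuclideanGeometry.angle_nonneg _ _ _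
  have hγπ : γ ≤ Real.pi := hγ ▸ EuclideanGeometry.angle_le_pi _ _ _
  have hc : 0 ≤ Real.cos (γ / 2) :=
    Real.cos_nonneg_of_neg_pi_div_two_le_of_le (by linarith) (by linarith)
  have hs : 0 ≤ Real.sin (γ / 2) :=
    Real.sin_nonneg_of_nonneg_of_le_pi (by linarith) (by linarith)
  have sBC := dist_sq_coord B C
  have sCD := dist_sq_coord C D
  have sDE := dist_sq_coord D E
  rw [dBC] at sBC
  rw [dCD] at sCD
  rw [dDE] at sDE
  constructor
  · have hpos := turns_same_sign hconv
    simp only [det2, PiLp.sub_apply] at hpos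
    have key := dot_eq_of_half_angle (c := Real.cos (γ / 2)) (by linarith) (by linarith)
      (by linarith) (by linarith) (by linarith) hc hpos
    rw [EuclideanGeometry.angle, ← InnerProductGeometry.inner_eq_zero_iff_angle_eq_pi_div_two]
    simp only [vsub_eq_sub, PiLp.inner_apply, Fin.sum_univ_two, PiLp.sub_apply,
      RCLike.inner_apply, conj_trivial]
    linarith
  · rw [← sq_eq_sq₀ dist_nonneg (by positivity), dist_sq_coord, mul_pow, Real.sin_sq]
    linarith
end
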